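/- Let k, m, n be positive integers with k+m ≤ n and let w, w′ ∈ Sₙ. If the structure constant c^{w′}_{w, r[k,m]} is nonzero, then w <ₖ w′ in the k-Bruhat order and ℓ(w′) = ℓ(w) + m. -/

import Mathlib

open Equiv MvPolynomial

attribute [local instance] Classical.propDecidable

namespace SchubertPieri

/-- Position `j ∈ {1,…,N}` (1-indexed) as an element of `Fin N` (0-indexed). -/
def pos (N : ℕ) [NeZero N] (j : ℕ) : Fin N :=
  ⟨(j - 1) % N, Nat.mod_lt _ (Nat.pos_of_ne_zero (NeZero.ne N))⟩

/-- The transposition `t_{a,b}` interchanging positions `a` and `b` (1-indexed). -/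
def t (N : ℕ) [NeZero N] (a b : ℕ) : Equiv.Perm (Fin N) :=
  Equiv.swap (pos N a) (pos N b)

/-- The value `w(j)` for `j ∈ {1,…,N}` (1-indexed). -/
def val {N : ℕ} [NeZero N] (w : Equiv.Perm (Fin N)) (j : ℕ) : ℕ :=
  (w (pos N j) : ℕ) + 1

/-- The length of `w`: its number of inversions. -/
def len {N : ℕ} (w : Equiv.Perm (Fin N)) : ℕ :=
  (Finset.univ.filter fun p : Fin N × Fin N => p.1 < p.2 ∧ w p.2 < w p.1).card

/-- The longest permutation `w₀ : j ↦ N+1-j`. -/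
def w0 (N : ℕ) : Equiv.Perm (Fin N) :=
  ⟨Fin.rev, Fin.rev, Fin.rev_rev, Fin.rev_rev⟩

/-- The product `t_{a 0, b 0} ⋯ t_{a (i-1), b (i-1)}`. -/
def tProd (N : ℕ) [NeZero N] (a b : ℕ → ℕ) (i : ℕ) : Equiv.Perm (Fin N) :=
  ((List.range i).map fun j => t N (a j) (b j)).prod

/-- `r[k,m] = t_{k,k+1} t_{k,k+2} ⋯ t_{k,k+m}`, the (m+1)-cycle with
`r[k,m](k) = k+m` and `r[k,m](j) = j-1` for `k+1 ≤ j ≤ k+m`. -/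
def rPerm (N k m : ℕ) [NeZero N] : Equiv.Perm (Fin N) :=
  ((List.range m).map fun i => t N k (k + 1 + i)).prod

/-- `c[k,m] = t_{k,k+1} t_{k-1,k+1} ⋯ t_{k-m+1,k+1}`, the (m+1)-cycle with
`c[k,m](j) = j+1` for `k-m+1 ≤ j ≤ k` and `c[k,m](k+1) = k-m+1`. -/
def cPerm (N k m : ℕ) [NeZero N] : Equiv.Perm (Fin N) :=
  ((List.range m).map fun i => t N (k - i) (k + 1)).prod

/-- The conditions that `aᵢ ≤ k < bᵢ` (with all indices in `{1,…,N}`) and that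
`ℓ(w t_{a₁ b₁} ⋯ t_{aᵢ bᵢ}) = ℓ(w) + i` for `1 ≤ i ≤ m`. -/
def StepOK (N k m : ℕ) [NeZero N] (w : Equiv.Perm (Fin N)) (a b : ℕ → ℕ) : Prop :=
  (∀ i, i < m → 1 ≤ a i ∧ a i ≤ k ∧ k < b i ∧ b i ≤ N) ∧
  (∀ i, i ≤ m → len (w * tProd N a b i) = len w + i)

/-- `w →_{r[k,m]} w'`. -/
def RelR (N k m : ℕ) [NeZero N] (w w' : Equiv.Perm (Fin N)) : Prop :=
  ∃ a b : ℕ → ℕ, StepOK N k m w a b ∧ w' = w * tProd N a b m ∧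
    (∀ i j, i < m → j < m → i ≠ j → b i ≠ b j)

/-- `w →_{c[k,m]} w'`. -/
def RelC (N k m : ℕ) [NeZero N] (w w' : Equiv.Perm (Fin N)) : Prop :=
  ∃ a b : ℕ → ℕ, StepOK N k m w a b ∧ w' = w * tProd N a b m ∧
    (∀ i j, i < m → j < m → i ≠ j → a i ≠ a j)

/-- The divided difference operator `∂ᵢ f = (f - sᵢ·f)/(xᵢ - xᵢ₊₁)` (1-indexed `i`);
the quotient is exact, and is recovered here as the (unique) witness of divisibility. -/
noncomputable def divDiff {N : ℕ} [NeZero N] (i : ℕ) (f : MvPolynomial (Fin N) ℤ) :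
    MvPolynomial (Fin N) ℤ :=
  if h : (X (pos N i) - X (pos N (i + 1))) ∣ (f - rename (⇑(t N i (i + 1))) f) then
    h.choose
  else 0

/-- `∂_{a₁} ∘ ⋯ ∘ ∂_{a_p}` applied to `f`, for a word `l = [a₁,…,a_p]`. -/
noncomputable def divDiffWord {N : ℕ} [NeZero N] (l : List ℕ) (f : MvPolynomial (Fin N) ℤ) :
    MvPolynomial (Fin N) ℤ :=
  l.foldr divDiff f

/-- Auxiliary: produce a reduced word for `w` by repeatedly removing a descent. -/
def redWordAux (N : ℕ) [NeZero N] : ℕ → Equiv.Perm (Fin N) → List ℕ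
  | 0, _ => []
  | fuel + 1, w =>
    match ((List.range (N - 1)).map (· + 1)).find? (fun i => decide (val w (i + 1) < val w i)) with
    | none => []
    | some i => redWordAux N fuel (w * t N i (i + 1)) ++ [i]

/-- A canonical reduced word `(a₁,…,a_p)` for `w`, i.e. `w = s_{a₁} ⋯ s_{a_p}` with `p = ℓ(w)`. -/
def redWord (N : ℕ) [NeZero N] (w : Equiv.Perm (Fin N)) : List ℕ :=
  redWordAux N (N * N) w

/-- The staircase monomial `x₁^{N-1} x₂^{N-2} ⋯ x_{N-1}`. -/
noncomputable def staircase (N : ℕ) : MvPolynomial (Fin N) ℤ :=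
  ∏ i : Fin N, X i ^ (N - 1 - (i : ℕ))

/-- The Schubert polynomial `𝔖_w = ∂_{w⁻¹w₀}(x₁^{N-1} ⋯ x_{N-1})`. -/
noncomputable def schubertPoly (N : ℕ) [NeZero N] (w : Equiv.Perm (Fin N)) :
    MvPolynomial (Fin N) ℤ :=
  divDiffWord (redWord N (w⁻¹ * w0 N)) (staircase N)

/-- The ideal of `Rₙ` generated by the symmetric polynomials with zero constant term. -/
noncomputable def symIdeal (N : ℕ) : Ideal (MvPolynomial (Fin N) ℤ) :=
  Ideal.span {f : MvPolynomial (Fin N) ℤ | f.IsSymmetric ∧ constantCoeff f = 0}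

/-- The ring `Hₙ = Rₙ/𝒮`. -/
abbrev HRing (N : ℕ) := MvPolynomial (Fin N) ℤ ⧸ symIdeal N

/-- The class of the Schubert polynomial `𝔖_w` in `Hₙ`. -/
noncomputable def SS (N : ℕ) [NeZero N] (w : Equiv.Perm (Fin N)) : HRing N :=
  Ideal.Quotient.mk (symIdeal N) (schubertPoly N w)

/-- The complete homogeneous symmetric polynomial of degree `m` in `x₁,…,x_k`. -/
noncomputable def hPoly (N k m : ℕ) : MvPolynomial (Fin N) ℤ :=
  ∑ s ∈ (Finset.univ.filter fun i : Fin N => (i : ℕ) < k).sym m,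
    (Multiset.map X (s : Multiset (Fin N))).prod

/-- The elementary symmetric polynomial of degree `m` in `x₁,…,x_k`. -/
noncomputable def ePoly (N k m : ℕ) : MvPolynomial (Fin N) ℤ :=
  ∑ s ∈ (Finset.univ.filter fun i : Fin N => (i : ℕ) < k).powersetCard m, ∏ i ∈ s, X i

/-- Covering relation of the `k`-Bruhat order. -/
def kCover (N k : ℕ) [NeZero N] (w w' : Equiv.Perm (Fin N)) : Prop :=
  ∃ a b : ℕ, 1 ≤ a ∧ a ≤ k ∧ k < b ∧ b ≤ N ∧ w' = w * t N a b ∧ len w' = len w + 1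

/-- The (strict) `k`-Bruhat order `<ₖ`. -/
def kBruhat (N k : ℕ) [NeZero N] : Equiv.Perm (Fin N) → Equiv.Perm (Fin N) → Prop :=
  Relation.TransGen (kCover N k)

/-- The label `w⁽ⁱ⁺¹⁾(a_{i+1})` (0-indexed `i`) of the `(i+1)`-st step of a path. -/
def label {N : ℕ} [NeZero N] (w : Equiv.Perm (Fin N)) (a b : ℕ → ℕ) (i : ℕ) : ℕ :=
  val (w * tProd N a b (i + 1)) (a i)

/-- `(a,b)` encodes a path of length `m` in the `k`-Bruhat order from `w` to `w'`
(normalized so that `a i = b i = 0` for `i ≥ m`, making the encoding unique). -/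
def PathWit (N k m : ℕ) [NeZero N] (w w' : Equiv.Perm (Fin N))
    (ab : (ℕ → ℕ) × (ℕ → ℕ)) : Prop :=
  StepOK N k m w ab.1 ab.2 ∧ w' = w * tProd N ab.1 ab.2 m ∧
    ∀ i, m ≤ i → ab.1 i = 0 ∧ ab.2 i = 0

/-- Paths of length `m` in the `k`-Bruhat order from `w` to `w'` with strictly
increasing labels. -/
def IncPaths (N k m : ℕ) [NeZero N] (w w' : Equiv.Perm (Fin N)) :
    Set ((ℕ → ℕ) × (ℕ → ℕ)) :=
  {ab | PathWit N k m w w' ab ∧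
    ∀ i j, i < j → j < m → label w ab.1 ab.2 i < label w ab.1 ab.2 j}

/-- Paths of length `m` in the `k`-Bruhat order from `w` to `w'` with strictly
decreasing labels. -/
def DecPaths (N k m : ℕ) [NeZero N] (w w' : Equiv.Perm (Fin N)) :
    Set ((ℕ → ℕ) × (ℕ → ℕ)) :=
  {ab | PathWit N k m w w' ab ∧
    ∀ i j, i < j → j < m → label w ab.1 ab.2 j < label w ab.1 ab.2 i}


/-- The cycle `(x₁ x₂ … x_r)` (sending `x₁ ↦ x₂ ↦ ⋯ ↦ x_r ↦ x₁`), as a product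
of transpositions. -/
def cycleList (N : ℕ) [NeZero N] (l : List ℕ) : Equiv.Perm (Fin N) :=
  ((l.zip l.tail).map fun p => t N p.1 p.2).prod

/-- The Grassmannian permutation `h[k;p,q]` of descent `k` and hook shape `(p,1^{q-1})`:
the `(p+q)`-cycle `(k-q+1  k-q+2 … k  k+p  k+p-1 … k+1)`. -/
def hookPerm (N k p q : ℕ) [NeZero N] : Equiv.Perm (Fin N) :=
  cycleList N (((List.range q).map fun i => k - q + 1 + i) ++
    ((List.range p).reverse.map fun i => k + 1 + i))

/-- `w|ₚ ∈ S_{N-1}`: delete row `p` and column `w(p)` from the permutation matrix of `w`. -/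
def drop {N : ℕ} (w : Equiv.Perm (Fin (N + 1))) (p : Fin (N + 1)) : Equiv.Perm (Fin N) :=
  Equiv.removeNone (((finSuccEquiv' p).symm.trans (w : Fin (N + 1) ≃ Fin (N + 1))).trans
    (finSuccEquiv' (w p)))

/-- `lam` is a partition with at most `k` parts (1-indexed parts `lam 1 ≥ lam 2 ≥ ⋯`,
normalized by `lam 0 = 0`). -/
def IsPartFun (k : ℕ) (lam : ℕ → ℕ) : Prop :=
  lam 0 = 0 ∧ (∀ j, 1 ≤ j → lam (j + 1) ≤ lam j) ∧ ∀ j, k < j → lam j = 0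

/-- `h_d(x₁,…,x_k)` for an integer `d`, with `h_d = 0` for `d < 0`. -/
noncomputable def hPolyZ (N k : ℕ) (d : ℤ) : MvPolynomial (Fin N) ℤ :=
  if 0 ≤ d then hPoly N k d.toNat else 0

/-- The Schur polynomial `s_λ(x₁,…,x_k)`, via the Jacobi–Trudi determinant
`det(h_{λᵢ+j-i})_{1 ≤ i,j ≤ k}`. -/
noncomputable def schurPoly (N k : ℕ) (lam : ℕ → ℕ) : MvPolynomial (Fin N) ℤ :=
  (Matrix.of fun i j : Fin k =>
    hPolyZ N k ((lam ((i : ℕ) + 1) : ℤ) + (j : ℕ) - (i : ℕ))).det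

/-- `r_j = #{i : aᵢ = j}` (with `i` ranging over `0,…,m-1`, 0-indexed). -/
def rJ (a : ℕ → ℕ) (m j : ℕ) : ℕ := ((Finset.range m).filter fun i => a i = j).card

/-- `μ_j = r_{j+1} + ⋯ + r_k`. -/
def muJ (a : ℕ → ℕ) (m k j : ℕ) : ℕ :=
  if j = 0 then 0 else ∑ j' ∈ Finset.Icc (j + 1) k, rJ a m j'

/-- `λ_j = μ_j + r_j`. -/
def lamJ (a : ℕ → ℕ) (m k j : ℕ) : ℕ :=
  if j = 0 then 0 else muJ a m k j + rJ a m j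

/-- `d_j = #{i : bᵢ = N+1-j}` (with `i` ranging over `0,…,m-1`, 0-indexed). -/
def dJ (b : ℕ → ℕ) (m N j : ℕ) : ℕ :=
  ((Finset.range m).filter fun i => b i = N + 1 - j).card

/-- `μ′_j = d_{j+1} + ⋯ + d_{N-k}`. -/
def muJ' (b : ℕ → ℕ) (m N k j : ℕ) : ℕ :=
  if j = 0 then 0 else ∑ j' ∈ Finset.Icc (j + 1) (N - k), dJ b m N j'

/-- `λ′_j = μ′_j + d_j`. -/
def lamJ' (b : ℕ → ℕ) (m N k j : ℕ) : ℕ :=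
  if j = 0 then 0 else muJ' b m N k j + dJ b m N j

/-- The conjugate (transpose) partition: `νᵗ_j = #{i : νᵢ ≥ j}`, for `ν` with at
most `k` parts. -/
def conjPart (k : ℕ) (nu : ℕ → ℕ) (j : ℕ) : ℕ :=
  if j = 0 then 0 else ((Finset.Icc 1 k).filter fun i => j ≤ nu i).card

/-- `wv` is the Grassmannian permutation of descent `k` and shape `nu`:
`wv(j) = j + ν_{k+1-j}` for `1 ≤ j ≤ k`, and `wv` is increasing on `{k+1,…,N}`. -/
def IsGrassOf (N k : ℕ) [NeZero N] (nu : ℕ → ℕ) (wv : Equiv.Perm (Fin N)) : Prop :=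
  (∀ j, 1 ≤ j → j ≤ k → val wv j = j + nu (k + 1 - j)) ∧
  (∀ j, k < j → j < N → val wv j < val wv (j + 1))

/-- Paths of length `m` in the `k`-Bruhat order from `w` to `w'` whose labels
increase strictly for the first `p` steps and decrease strictly thereafter
(positions `p, p+1, …, m` being decreasing, 1-indexed). -/
def IncDecPaths (N k m p : ℕ) [NeZero N] (w w' : Equiv.Perm (Fin N)) :
    Set ((ℕ → ℕ) × (ℕ → ℕ)) :=
  {ab | PathWit N k m w w' ab ∧
    (∀ i j, i < j → j < p → label w ab.1 ab.2 i < label w ab.1 ab.2 j) ∧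
    (∀ i j, p - 1 ≤ i → i < j → j < m → label w ab.1 ab.2 j < label w ab.1 ab.2 i)}

/-- Paths of length `m` in the `k`-Bruhat order from `w` to `w'` whose labels
decrease strictly for the first `q` steps and increase strictly thereafter. -/
def DecIncPaths (N k m q : ℕ) [NeZero N] (w w' : Equiv.Perm (Fin N)) :
    Set ((ℕ → ℕ) × (ℕ → ℕ)) :=
  {ab | PathWit N k m w w' ab ∧
    (∀ i j, i < j → j < q → label w ab.1 ab.2 j < label w ab.1 ab.2 i) ∧
    (∀ i j, q - 1 ≤ i → i < j → j < m → label w ab.1 ab.2 i < label w ab.1 ab.2 j)}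



/-! ### Basic facts on positions and length -/

set_option linter.unusedSectionVars false

section Basics

variable {N : ℕ} [NeZero N]

lemma pos_val {i : ℕ} (h : i ≤ N) (h1 : 1 ≤ i) : ((pos N i : Fin N) : ℕ) = i - 1 := by
  unfold pos
  exact Nat.mod_eq_of_lt (by omega)

lemma exists_pos (a : Fin N) : ∃ i, 1 ≤ i ∧ i ≤ N ∧ pos N i = a :=
  ⟨a + 1, by omega, a.2, by ext; rw [pos_val (by have := a.2; omega) (by omega)]; simp⟩

/-- The simple transposition. -/
abbrev s (N : ℕ) [NeZero N] (i : ℕ) : Equiv.Perm (Fin N) := t N i (i + 1)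

lemma pos_ne {i : ℕ} (h1 : 1 ≤ i) (h : i < N) : pos N i ≠ pos N (i + 1) := by
  intro e
  have := congrArg Fin.val e
  rw [pos_val (by omega) h1, pos_val (by omega) (by omega)] at this
  omega

lemma s_mul_s (i : ℕ) : s N i * s N i = 1 := by
  unfold s t; exact Equiv.swap_mul_self _ _

lemma mul_s_s (w : Equiv.Perm (Fin N)) (i : ℕ) : w * s N i * s N i = w := by
  rw [mul_assoc, s_mul_s, mul_one]

lemma s_inv (i : ℕ) : (s N i)⁻¹ = s N i := by
  unfold s t; exact Equiv.swap_inv _ _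

lemma s_lt {i : ℕ} (h1 : 1 ≤ i) (h : i < N) {p q : Fin N} (hpq : p < q)
    (hne : ¬ (p = pos N i ∧ q = pos N (i + 1))) : s N i p < s N i q := by
  have e1 := pos_val (N := N) (i := i) (by omega) h1
  have e2 := pos_val (N := N) (i := i + 1) (by omega) (by omega)
  unfold s t
  rw [Equiv.swap_apply_def, Equiv.swap_apply_def]
  simp only [Fin.ext_iff, Fin.lt_def] at *
  split_ifs <;> omega

/-- The set of inversions. -/
def invSet (w : Equiv.Perm (Fin N)) : Finset (Fin N × Fin N) :=
  Finset.univ.filter fun p : Fin N × Fin N => p.1 < p.2 ∧ w p.2 < w p.1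

lemma len_eq (w : Equiv.Perm (Fin N)) : len w = (invSet w).card := rfl

lemma mem_invSet (w : Equiv.Perm (Fin N)) (p q : Fin N) :
    (p, q) ∈ invSet w ↔ p < q ∧ w q < w p := by
  unfold invSet; rw [Finset.mem_filter]; simp

lemma len_asc (w : Equiv.Perm (Fin N)) {i : ℕ} (h1 : 1 ≤ i) (h : i < N)
    (hw : w (pos N i) < w (pos N (i + 1))) : len (w * s N i) = len w + 1 := by
  have hlt : pos N i < pos N (i + 1) := by
    rw [Fin.lt_def, pos_val (by omega) h1, pos_val (by omega) (by omega)]; omega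
  have sl : s N i (pos N i) = pos N (i + 1) := Equiv.swap_apply_left _ _
  have sr : s N i (pos N (i + 1)) = pos N i := Equiv.swap_apply_right _ _
  have ss : ∀ a, s N i (s N i a) = a := fun a => by rw [← Equiv.Perm.mul_apply, s_mul_s]; rfl
  have hmem : (pos N i, pos N (i + 1)) ∈ invSet (w * s N i) := by
    rw [mem_invSet]
    refine ⟨hlt, ?_⟩
    rw [Equiv.Perm.mul_apply, Equiv.Perm.mul_apply, sl, sr]; exact hw
  rw [len_eq, len_eq, ← Finset.card_erase_add_one hmem]
  congr 1
  refine Finset.card_nbij' (fun p => (s N i p.1, s N i p.2)) (fun p => (s N i p.1, s N i p.2))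
    ?_ ?_ ?_ ?_
  · rintro ⟨p, q⟩ hp
    rw [Finset.mem_coe, Finset.mem_erase, mem_invSet] at hp
    rw [Finset.mem_coe, mem_invSet]
    refine ⟨s_lt h1 h hp.2.1 ?_, hp.2.2⟩
    rintro ⟨rfl, rfl⟩
    exact hp.1 rfl
  · rintro ⟨p, q⟩ hp
    rw [Finset.mem_coe, mem_invSet] at hp
    rw [Finset.mem_coe, Finset.mem_erase, mem_invSet, Equiv.Perm.mul_apply,
      Equiv.Perm.mul_apply, ss, ss]
    refine ⟨?_, s_lt h1 h hp.1 ?_, hp.2⟩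
    · intro e
      rw [Prod.mk.injEq] at e
      have e1' : p = pos N (i + 1) := by rw [← ss p, e.1, sl]
      have e2' : q = pos N i := by rw [← ss q, e.2, sr]
      rw [e1', e2'] at hp
      exact absurd hp.1 (not_lt.mpr hlt.le)
    · rintro ⟨rfl, rfl⟩
      exact absurd hp.2 (not_lt.mpr hw.le)
  · rintro ⟨p, q⟩ _; simp [ss]
  · rintro ⟨p, q⟩ _; simp [ss]

/-- `w` has a descent at `i`. -/
def Desc (w : Equiv.Perm (Fin N)) (i : ℕ) : Prop := w (pos N (i + 1)) < w (pos N i)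

lemma desc_s (w : Equiv.Perm (Fin N)) {i : ℕ} (h1 : 1 ≤ i) (h : i < N) :
    Desc (w * s N i) i ↔ ¬ Desc w i := by
  have sl : s N i (pos N i) = pos N (i + 1) := Equiv.swap_apply_left _ _
  have sr : s N i (pos N (i + 1)) = pos N i := Equiv.swap_apply_right _ _
  unfold Desc
  rw [Equiv.Perm.mul_apply, Equiv.Perm.mul_apply, sl, sr, not_lt]
  refine ⟨le_of_lt, fun h' => lt_of_le_of_ne h' ?_⟩
  intro e
  exact pos_ne h1 h (w.injective e)

lemma len_not_desc (w : Equiv.Perm (Fin N)) {i : ℕ} (h1 : 1 ≤ i) (h : i < N)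
    (hw : ¬ Desc w i) : len (w * s N i) = len w + 1 := by
  apply len_asc w h1 h
  unfold Desc at hw
  refine lt_of_le_of_ne (not_lt.mp hw) ?_
  intro e
  exact pos_ne h1 h (w.injective e)

lemma len_desc (w : Equiv.Perm (Fin N)) {i : ℕ} (h1 : 1 ≤ i) (h : i < N)
    (hw : Desc w i) : len (w * s N i) + 1 = len w := by
  have h2 : ¬ Desc (w * s N i) i := by rw [desc_s w h1 h]; simpa using hw
  have := len_not_desc (w * s N i) h1 h h2
  rw [mul_s_s] at this
  omega

lemma strictMono_eq_one (w : Equiv.Perm (Fin N)) (hw : StrictMono w) : w = 1 := by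
  ext a
  have h1 : a ≤ w a := hw.le_apply
  have h2 : StrictMono (w⁻¹ : Equiv.Perm (Fin N)) := by
    intro x y hxy
    rw [← hw.lt_iff_lt]; simpa using hxy
  have h3 : w a ≤ w⁻¹ (w a) := h2.le_apply
  simp at h3
  simp [le_antisymm h3 h1]

lemma asc_block (w : Equiv.Perm (Fin N)) (a b : ℕ) (ha : 1 ≤ a) (hab : a < b) (hb : b ≤ N)
    (h : ∀ i, a ≤ i → i < b → ¬ Desc w i) : w (pos N a) < w (pos N b) := by
  induction b, hab using Nat.le_induction with
  | base =>
    refine lt_of_le_of_ne (not_lt.mp (h a le_rfl (by omega))) ?_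
    intro e; exact pos_ne ha (by omega) (w.injective e)
  | succ b hab ih =>
    refine lt_trans (ih (by omega) fun i hi hi' => h i hi (by omega)) ?_
    refine lt_of_le_of_ne (not_lt.mp (h b (by omega) (by omega))) ?_
    intro e; exact pos_ne (by omega) (by omega) (w.injective e)

lemma eq_one_of_no_desc (w : Equiv.Perm (Fin N)) (h : ∀ i, 1 ≤ i → i < N → ¬ Desc w i) :
    w = 1 := by
  apply strictMono_eq_one
  intro a b hab
  obtain ⟨i, h1, h2, rfl⟩ := exists_pos a
  obtain ⟨j, h3, h4, rfl⟩ := exists_pos b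
  rw [Fin.lt_def, pos_val h2 h1, pos_val h4 h3] at hab
  exact asc_block w i j h1 (by omega) h4 fun l hl hl' => h l (by omega) (by omega)

lemma exists_desc (w : Equiv.Perm (Fin N)) (h : w ≠ 1) : ∃ i, 1 ≤ i ∧ i < N ∧ Desc w i := by
  by_contra hc
  push Not at hc
  exact h (eq_one_of_no_desc w hc)

lemma len_one : len (1 : Equiv.Perm (Fin N)) = 0 := by
  unfold len
  rw [Finset.card_eq_zero, Finset.filter_eq_empty_iff]
  rintro ⟨p, q⟩ _ ⟨h1, h2⟩
  exact absurd h1 (not_lt.mpr h2.le)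

lemma eq_one_of_len (w : Equiv.Perm (Fin N)) (h : len w = 0) : w = 1 := by
  by_contra hc
  obtain ⟨i, h1, h2, h3⟩ := exists_desc w hc
  have := len_desc w h1 h2 h3
  omega

lemma len_inv (w : Equiv.Perm (Fin N)) : len w⁻¹ = len w := by
  unfold len
  refine Finset.card_nbij' (fun p => (w⁻¹ p.2, w⁻¹ p.1)) (fun p => (w p.2, w p.1)) ?_ ?_ ?_ ?_
  · rintro ⟨p, q⟩ hp
    simpa [and_comm] using hp
  · rintro ⟨p, q⟩ hp
    simpa [and_comm] using hp
  · rintro ⟨p, q⟩ _; simp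
  · rintro ⟨p, q⟩ _; simp

lemma len_w0 : len (w0 N) =
    (Finset.univ.filter fun p : Fin N × Fin N => p.1 < p.2).card := by
  unfold len
  congr 1
  ext ⟨p, q⟩
  simp [w0]

lemma len_mul_w0 (w : Equiv.Perm (Fin N)) : len (w * w0 N) + len w = len (w0 N) := by
  rw [len_w0]
  have hsplit := Finset.card_filter_add_card_filter_not
    (s := Finset.univ.filter fun p : Fin N × Fin N => p.1 < p.2) (fun p => w p.1 < w p.2)
  rw [← hsplit]
  congr 1
  · rw [len_eq]
    refine Finset.card_nbij' (fun p => (Fin.rev p.2, Fin.rev p.1))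
      (fun p => (Fin.rev p.2, Fin.rev p.1)) ?_ ?_ ?_ ?_
    · rintro ⟨p, q⟩ hp
      rw [Finset.mem_coe, mem_invSet] at hp
      simpa [w0] using hp
    · rintro ⟨p, q⟩ hp
      rw [Finset.mem_coe, mem_invSet]
      simpa [w0] using hp
    · rintro ⟨p, q⟩ _; simp
    · rintro ⟨p, q⟩ _; simp
  · unfold len
    congr 1
    ext ⟨p, q⟩
    simp only [Finset.mem_filter, Finset.mem_univ, true_and, not_lt]
    refine and_congr_right fun h => ⟨le_of_lt, fun h' => lt_of_le_of_ne h' ?_⟩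
    intro e
    exact h.ne (w.injective e).symm

lemma w0_inv : (w0 N)⁻¹ = w0 N := rfl

lemma w0_mul_w0 : w0 N * w0 N = 1 := by
  ext a; simp [w0]

lemma eq_w0_of_len (w : Equiv.Perm (Fin N)) (h : len w = len (w0 N)) : w = w0 N := by
  have := len_mul_w0 w
  have h2 := eq_one_of_len (w * w0 N) (by omega)
  rw [← mul_one (w0 N), ← h2]
  calc w = w * (w0 N * w0 N) := by rw [w0_mul_w0, mul_one]
    _ = w * w0 N * w0 N := (mul_assoc _ _ _).symm
    _ = w0 N * (w * w0 N) := by rw [h2, one_mul, mul_one]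

end Basics


/-! ### Divided differences -/

section DivDiff

variable {N : ℕ} [NeZero N]

/-- The action of `s_i` on polynomials. -/
noncomputable abbrev act (i : ℕ) (f : MvPolynomial (Fin N) ℤ) : MvPolynomial (Fin N) ℤ :=
  rename (⇑(s N i)) f

lemma act_act (i : ℕ) (f : MvPolynomial (Fin N) ℤ) : act i (act i f) = f := by
  unfold act
  rw [rename_rename]
  have : (⇑(s N i) ∘ ⇑(s N i)) = id := by
    rw [← Equiv.Perm.coe_mul, s_mul_s]; rfl
  rw [this, rename_id]; rfl

lemma dvd_sub_rename (a b : Fin N) (f : MvPolynomial (Fin N) ℤ) :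
    ((X a : MvPolynomial (Fin N) ℤ) - X b) ∣ f - rename (⇑(Equiv.swap a b)) f := by
  induction f using MvPolynomial.induction_on with
  | C r => simp
  | add p q hp hq =>
    have := dvd_add hp hq
    rw [map_add]
    convert this using 1; ring
  | mul_X p j hp =>
    have hX : ((X a : MvPolynomial (Fin N) ℤ) - X b) ∣ X j - X (Equiv.swap a b j) := by
      rw [Equiv.swap_apply_def]
      split_ifs with h1 h2
      · rw [h1]
      · rw [h2, ← neg_sub, neg_dvd]
      · simp
    rw [map_mul, rename_X]
    have := dvd_add (hp.mul_right (X j)) (hX.mul_left (rename (⇑(Equiv.swap a b)) p))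
    convert this using 1; ring

lemma dd_spec (i : ℕ) (f : MvPolynomial (Fin N) ℤ) :
    (X (pos N i) - X (pos N (i + 1))) * divDiff i f = f - act i f := by
  have h : ((X (pos N i) : MvPolynomial (Fin N) ℤ) - X (pos N (i + 1))) ∣
    (f - rename (⇑(t N i (i + 1))) f) := dvd_sub_rename _ _ f
  unfold divDiff
  rw [dif_pos h]
  exact h.choose_spec.symm

lemma X_sub_ne {a b : Fin N} (h : a ≠ b) : (X a : MvPolynomial (Fin N) ℤ) - X b ≠ 0 := by
  intro e
  exact h (X_injective (R := ℤ) (sub_eq_zero.mp e))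

lemma dd_unique {i : ℕ} (h1 : 1 ≤ i) (h : i < N) {f g : MvPolynomial (Fin N) ℤ}
    (hg : (X (pos N i) - X (pos N (i + 1))) * g = f - act i f) : divDiff i f = g :=
  mul_left_cancel₀ (X_sub_ne (pos_ne h1 h)) ((dd_spec i f).trans hg.symm)

lemma dd_add {i : ℕ} (h1 : 1 ≤ i) (h : i < N) (f g : MvPolynomial (Fin N) ℤ) :
    divDiff i (f + g) = divDiff i f + divDiff i g := by
  apply dd_unique h1 h
  rw [mul_add, dd_spec, dd_spec]
  simp only [act, map_add]; ring

lemma dd_mul {i : ℕ} (h1 : 1 ≤ i) (h : i < N) (f g : MvPolynomial (Fin N) ℤ) :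
    divDiff i (f * g) = divDiff i f * g + act i f * divDiff i g := by
  apply dd_unique h1 h
  have e1 := dd_spec i f
  have e2 := dd_spec i g
  simp only [act, map_mul] at *
  linear_combination g * e1 + (rename (⇑(s N i)) f) * e2

lemma dd_zero_of_act {i : ℕ} (h1 : 1 ≤ i) (h : i < N) {f : MvPolynomial (Fin N) ℤ}
    (hf : act i f = f) : divDiff i f = 0 := by
  apply dd_unique h1 h
  rw [hf]; ring

lemma act_X_l (i : ℕ) : act i (X (pos N i) : MvPolynomial (Fin N) ℤ) = X (pos N (i + 1)) := by
  unfold act s t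
  rw [rename_X, Equiv.swap_apply_left]

lemma act_X_r (i : ℕ) : act i (X (pos N (i + 1)) : MvPolynomial (Fin N) ℤ) = X (pos N i) := by
  unfold act s t
  rw [rename_X, Equiv.swap_apply_right]

lemma act_X_ne (i : ℕ) (a : Fin N) (h1 : a ≠ pos N i) (h2 : a ≠ pos N (i + 1)) :
    act i (X a : MvPolynomial (Fin N) ℤ) = X a := by
  unfold act s t
  rw [rename_X, Equiv.swap_apply_of_ne_of_ne h1 h2]

lemma act_dd {i : ℕ} (h1 : 1 ≤ i) (h : i < N) (f : MvPolynomial (Fin N) ℤ) :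
    act i (divDiff i f) = divDiff i f := by
  have e := dd_spec i f
  have e2 := congrArg (act i) e
  have h3 : act i ((X (pos N i) - X (pos N (i + 1))) * divDiff i f) =
      (X (pos N (i + 1)) - X (pos N i)) * act i (divDiff i f) := by
    have a1 := act_X_l (N := N) i
    have a2 := act_X_r (N := N) i
    unfold act at *
    rw [map_mul, map_sub, a1, a2]
  have h4 : act i (f - act i f) = act i f - f := by
    have := act_act i f
    unfold act at *
    rw [map_sub, this]
  rw [h3, h4] at e2
  apply mul_left_cancel₀ (X_sub_ne (pos_ne h1 h))
  linear_combination -e2 - e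

lemma dd_dd {i : ℕ} (h1 : 1 ≤ i) (h : i < N) (f : MvPolynomial (Fin N) ℤ) :
    divDiff i (divDiff i f) = 0 := dd_zero_of_act h1 h (act_dd h1 h f)

lemma dd_zero {i : ℕ} (h1 : 1 ≤ i) (h : i < N) :
    divDiff i (0 : MvPolynomial (Fin N) ℤ) = 0 := dd_zero_of_act h1 h (by simp [act])

lemma pos_ne' {i j : ℕ} (h1 : 1 ≤ i) (h : i ≤ N) (h1' : 1 ≤ j) (h' : j ≤ N) (hij : i ≠ j) :
    pos N i ≠ pos N j := by
  intro e
  have := congrArg Fin.val e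
  rw [pos_val h h1, pos_val h' h1'] at this
  omega

lemma s_comm {i j : ℕ} (h1 : 1 ≤ i) (hij : i + 2 ≤ j) (h : j < N) :
    s N i * s N j = s N j * s N i := by
  unfold s t
  apply Equiv.Perm.Disjoint.commute
  intro x
  by_cases hx : x = pos N i ∨ x = pos N (i + 1)
  · right
    apply Equiv.swap_apply_of_ne_of_ne
    · rintro rfl
      rcases hx with hx | hx
      · exact pos_ne' (by omega) (by omega) (by omega) (by omega) (by omega) hx
      · exact pos_ne' (by omega) (by omega) (by omega) (by omega) (by omega) hx
    · rintro rfl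
      rcases hx with hx | hx
      · exact pos_ne' (by omega) (by omega) (by omega) (by omega) (by omega) hx
      · exact pos_ne' (by omega) (by omega) (by omega) (by omega) (by omega) hx
  · left
    push Not at hx
    exact Equiv.swap_apply_of_ne_of_ne hx.1 hx.2

lemma s_braid {i : ℕ} (h1 : 1 ≤ i) (h : i + 1 < N) :
    s N i * s N (i + 1) * s N i = s N (i + 1) * s N i * s N (i + 1) := by
  unfold s t
  have n1 : pos N i ≠ pos N (i + 1) := pos_ne' (by omega) (by omega) (by omega) (by omega) (by omega)
  have n2 : pos N i ≠ pos N (i + 1 + 1) :=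
    pos_ne' (by omega) (by omega) (by omega) (by omega) (by omega)
  have n3 : pos N (i + 1) ≠ pos N (i + 1 + 1) :=
    pos_ne' (by omega) (by omega) (by omega) (by omega) (by omega)
  rw [Equiv.swap_mul_swap_mul_swap n1 n2, Equiv.swap_comm (pos N i) (pos N (i + 1)),
    Equiv.swap_comm (pos N (i + 1)) (pos N (i + 1 + 1)),
    Equiv.swap_mul_swap_mul_swap n3.symm n2.symm, Equiv.swap_comm]

lemma act_mul (i j : ℕ) (f : MvPolynomial (Fin N) ℤ) :
    act i (act j f) = rename (⇑(s N i * s N j)) f := by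
  unfold act; rw [rename_rename]; rfl

lemma act_mul3 (i j k : ℕ) (f : MvPolynomial (Fin N) ℤ) :
    act i (act j (act k f)) = rename (⇑(s N i * s N j * s N k)) f := by
  unfold act; rw [rename_rename, rename_rename]; rfl

lemma dd_comm {i j : ℕ} (h1 : 1 ≤ i) (hij : i + 2 ≤ j) (h : j < N)
    (f : MvPolynomial (Fin N) ℤ) :
    divDiff i (divDiff j f) = divDiff j (divDiff i f) := by
  have n1 : pos N i ≠ pos N j := pos_ne' (by omega) (by omega) (by omega) (by omega) (by omega)
  have n2 : pos N i ≠ pos N (j + 1) :=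
    pos_ne' (by omega) (by omega) (by omega) (by omega) (by omega)
  have n3 : pos N (i + 1) ≠ pos N j :=
    pos_ne' (by omega) (by omega) (by omega) (by omega) (by omega)
  have n4 : pos N (i + 1) ≠ pos N (j + 1) :=
    pos_ne' (by omega) (by omega) (by omega) (by omega) (by omega)
  have e1 := dd_spec i f
  have e2 := dd_spec j f
  have e3 := dd_spec i (divDiff j f)
  have e4 := dd_spec j (divDiff i f)
  have e5 := congrArg (act i) e2
  have e6 := congrArg (act j) e1
  have a1 := act_X_ne (N := N) i _ n1.symm n3.symm
  have a2 := act_X_ne (N := N) i _ n2.symm n4.symm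
  have a3 := act_X_ne (N := N) j _ n1 n2
  have a4 := act_X_ne (N := N) j _ n3 n4
  have c : act i (act j f) = act j (act i f) := by
    rw [act_mul, act_mul, s_comm h1 hij h]
  unfold act at *
  rw [map_mul, map_sub, map_sub, a1, a2] at e5
  rw [map_mul, map_sub, map_sub, a3, a4] at e6
  apply mul_left_cancel₀ (X_sub_ne (pos_ne h1 (by omega)))
  apply mul_left_cancel₀ (X_sub_ne (pos_ne (N := N) (i := j) (by omega) (by omega)))
  linear_combination (X (pos N j) - X (pos N (j + 1))) * e3 + e2 - e5
    - (X (pos N i) - X (pos N (i + 1))) * e4 - e1 + e6 + c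

lemma dd_braid {i : ℕ} (h1 : 1 ≤ i) (h : i + 1 < N) (f : MvPolynomial (Fin N) ℤ) :
    divDiff i (divDiff (i + 1) (divDiff i f)) =
      divDiff (i + 1) (divDiff i (divDiff (i + 1) f)) := by
  have n1 : pos N i ≠ pos N (i + 1) := pos_ne' (by omega) (by omega) (by omega) (by omega) (by omega)
  have n2 : pos N i ≠ pos N (i + 1 + 1) :=
    pos_ne' (by omega) (by omega) (by omega) (by omega) (by omega)
  have n3 : pos N (i + 1) ≠ pos N (i + 1 + 1) :=
    pos_ne' (by omega) (by omega) (by omega) (by omega) (by omega)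
  have al := act_X_l (N := N) i
  have ar := act_X_r (N := N) i
  have an := act_X_ne (N := N) i _ n2.symm n3.symm
  have bl := act_X_l (N := N) (i + 1)
  have br := act_X_r (N := N) (i + 1)
  have bn := act_X_ne (N := N) (i + 1) _ n1 n2
  -- first word
  have e1 := dd_spec i f
  have e2 := dd_spec (i + 1) (divDiff i f)
  have e3 := dd_spec i (divDiff (i + 1) (divDiff i f))
  have e4 := congrArg (act (i + 1)) e1
  have e5 := congrArg (act i) e4
  have e6 := congrArg (act i) e2
  have e7 := act_dd h1 (by omega) f
  -- second word
  have g1 := dd_spec (i + 1) f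
  have g2 := dd_spec i (divDiff (i + 1) f)
  have g3 := dd_spec (i + 1) (divDiff i (divDiff (i + 1) f))
  have g4 := congrArg (act i) g1
  have g5 := congrArg (act (i + 1)) g4
  have g6 := congrArg (act (i + 1)) g2
  have g7 := act_dd (i := i + 1) (by omega) (by omega) f
  have c : act i (act (i + 1) (act i f)) = act (i + 1) (act i (act (i + 1) f)) := by
    rw [act_mul3, act_mul3, s_braid h1 h]
  unfold act at *
  simp only [map_mul, map_sub, al, ar, an, bl, br, bn, e7, g7] at e4 e5 e6 g4 g5 g6
  set a : MvPolynomial (Fin N) ℤ := X (pos N i)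
  set b : MvPolynomial (Fin N) ℤ := X (pos N (i + 1))
  set d : MvPolynomial (Fin N) ℤ := X (pos N (i + 1 + 1))
  have k1 : a - b ≠ 0 := X_sub_ne n1
  have k2 : a - d ≠ 0 := X_sub_ne n2
  have k3 : b - d ≠ 0 := X_sub_ne n3
  apply mul_left_cancel₀ k1
  apply mul_left_cancel₀ k2
  apply mul_left_cancel₀ k3
  linear_combination (a - d) * (b - d) * e3 + (a - d) * e2 - (b - d) * e6 + e1 - e4 + e5
    - ((a - d) * (a - b) * g3 + (a - d) * g2 - (a - b) * g6 + g1 - g4 + g5) - c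

lemma dd_homog {i : ℕ} (h1 : 1 ≤ i) (h : i < N) {f : MvPolynomial (Fin N) ℤ} {d : ℕ}
    (hf : f.IsHomogeneous d) (e : ℕ) (he : e + 1 ≠ d) :
    homogeneousComponent e (divDiff i f) = 0 := by
  set L : MvPolynomial (Fin N) ℤ := X (pos N i) - X (pos N (i + 1)) with hL
  have hLh : L.IsHomogeneous 1 := (isHomogeneous_X _ _).sub (isHomogeneous_X _ _)
  set q := divDiff i f with hq
  have hspec : L * q = f - act i f := dd_spec i f
  have hh : (L * q).IsHomogeneous d := by
    rw [hspec]; exact hf.sub hf.rename_isHomogeneous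
  have key : homogeneousComponent (e + 1) (L * q) = L * homogeneousComponent e q := by
    conv_lhs => rw [← sum_homogeneousComponent q, Finset.mul_sum, map_sum]
    have : ∀ x ∈ Finset.range (q.totalDegree + 1),
        homogeneousComponent (e + 1) (L * homogeneousComponent x q) =
          if x = e then L * homogeneousComponent e q else 0 := by
      intro x _
      have hm : L * homogeneousComponent x q ∈ homogeneousSubmodule (Fin N) ℤ (x + 1) := by
        rw [mem_homogeneousSubmodule, add_comm]
        exact hLh.mul (homogeneousComponent_isHomogeneous x q)
      rw [homogeneousComponent_of_mem hm]
      by_cases hx : x = e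
      · subst hx; simp
      · rw [if_neg hx, if_neg (by omega)]
    rw [Finset.sum_congr rfl this, Finset.sum_ite_eq']
    split_ifs with hr
    · rfl
    · rw [Finset.mem_range] at hr
      rw [homogeneousComponent_eq_zero _ _ (by omega), mul_zero]
  rw [homogeneousComponent_of_mem hh, if_neg he] at key
  have := mul_eq_zero.mp key.symm
  exact this.resolve_left (X_sub_ne (pos_ne h1 h))

lemma dd_homog' {i : ℕ} (h1 : 1 ≤ i) (h : i < N) {f : MvPolynomial (Fin N) ℤ} {d : ℕ}
    (hf : f.IsHomogeneous (d + 1)) : (divDiff i f).IsHomogeneous d := by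
  have : divDiff i f = homogeneousComponent d (divDiff i f) := by
    conv_lhs => rw [← sum_homogeneousComponent (divDiff i f)]
    rw [Finset.sum_eq_single d]
    · intro b _ hb
      exact dd_homog h1 h hf b (by omega)
    · intro hr
      rw [Finset.mem_range] at hr
      exact homogeneousComponent_eq_zero _ _ (by omega)
  rw [this]
  exact homogeneousComponent_isHomogeneous _ _

lemma dd_homog0 {i : ℕ} (h1 : 1 ≤ i) (h : i < N) {f : MvPolynomial (Fin N) ℤ}
    (hf : f.IsHomogeneous 0) : divDiff i f = 0 := by
  rw [← sum_homogeneousComponent (divDiff i f)]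
  apply Finset.sum_eq_zero
  intro b _
  exact dd_homog h1 h hf b (by omega)

end DivDiff


/-! ### The operators `∂_w` -/

section DOp

variable {N : ℕ} [NeZero N]

/-- The operator `∂_w`. -/
noncomputable def D (w : Equiv.Perm (Fin N)) (f : MvPolynomial (Fin N) ℤ) :
    MvPolynomial (Fin N) ℤ := divDiffWord (redWord N w) f

lemma redWordAux_cases (w : Equiv.Perm (Fin N)) :
    (w = 1 ∧ ∀ fuel, redWordAux N fuel w = []) ∨
    ∃ i, 1 ≤ i ∧ i < N ∧ Desc w i ∧
      ∀ fuel, redWordAux N (fuel + 1) w = redWordAux N fuel (w * s N i) ++ [i] := by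
  rcases hfind : ((List.range (N - 1)).map (· + 1)).find?
      (fun i => decide (val w (i + 1) < val w i)) with _ | i
  · left
    constructor
    · apply eq_one_of_no_desc
      intro i h1 h2 hd
      rw [List.find?_eq_none] at hfind
      have := hfind i (by
        rw [List.mem_map]
        exact ⟨i - 1, by rw [List.mem_range]; omega, by omega⟩)
      apply this
      rw [decide_eq_true_iff]
      unfold val
      unfold Desc at hd
      rw [Fin.lt_def] at hd
      omega
    · intro fuel
      cases fuel with
      | zero => rfl
      | succ fuel => unfold redWordAux; rw [hfind]
  · right
    have hm := List.mem_of_find?_eq_some hfind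
    have hp := List.find?_some hfind
    rw [List.mem_map] at hm
    obtain ⟨j, hj, rfl⟩ := hm
    rw [List.mem_range] at hj
    rw [decide_eq_true_iff] at hp
    refine ⟨j + 1, by omega, by omega, ?_, ?_⟩
    · unfold val at hp
      unfold Desc
      rw [Fin.lt_def]
      omega
    · intro fuel
      conv_lhs => unfold redWordAux
      rw [hfind]

lemma redWordAux_fuel (fuel : ℕ) : ∀ (fuel' : ℕ) (w : Equiv.Perm (Fin N)),
    len w ≤ fuel → len w ≤ fuel' → redWordAux N fuel w = redWordAux N fuel' w := by
  induction fuel with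
  | zero =>
    intro fuel' w h1 _
    have : w = 1 := eq_one_of_len w (by omega)
    rcases redWordAux_cases w with ⟨_, h⟩ | ⟨i, h1', h2', h3', _⟩
    · rw [h, h]
    · have := len_desc w h1' h2' h3'
      omega
  | succ fuel ih =>
    intro fuel' w h1 h2
    rcases redWordAux_cases w with ⟨_, h⟩ | ⟨i, h1', h2', h3', h4⟩
    · rw [h, h]
    · have hl := len_desc w h1' h2' h3'
      obtain ⟨g, rfl⟩ : ∃ g, fuel' = g + 1 := ⟨fuel' - 1, by omega⟩
      rw [h4, h4, ih g _ (by omega) (by omega)]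

lemma len_le (w : Equiv.Perm (Fin N)) : len w ≤ N * N := by
  unfold len
  refine (Finset.card_filter_le _ _).trans ?_
  simp

lemma D_one (f : MvPolynomial (Fin N) ℤ) : D 1 f = f := by
  unfold D redWord
  rcases redWordAux_cases (1 : Equiv.Perm (Fin N)) with ⟨_, h⟩ | ⟨i, h1', h2', h3', _⟩
  · rw [h]; rfl
  · have := len_desc 1 h1' h2' h3'
    rw [len_one] at this
    omega

lemma D_first (w : Equiv.Perm (Fin N)) (hw : w ≠ 1) :
    ∃ i, 1 ≤ i ∧ i < N ∧ Desc w i ∧ ∀ f, D w f = D (w * s N i) (divDiff i f) := by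
  rcases redWordAux_cases w with ⟨h, _⟩ | ⟨i, h1', h2', h3', h4⟩
  · exact absurd h hw
  · refine ⟨i, h1', h2', h3', fun f => ?_⟩
    have hl := len_desc w h1' h2' h3'
    have hle := len_le w
    unfold D redWord
    rw [redWordAux_fuel (N * N) (N * N + 1) w hle (by omega), h4]
    unfold divDiffWord
    rw [List.foldr_append]
    rfl

lemma desc_comm (w : Equiv.Perm (Fin N)) {i j : ℕ} (h1 : 1 ≤ i) (h : i < N) (h1' : 1 ≤ j)
    (h' : j < N) (hij : i + 2 ≤ j ∨ j + 2 ≤ i) : Desc (w * s N i) j ↔ Desc w j := by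
  unfold Desc
  rw [Equiv.Perm.mul_apply, Equiv.Perm.mul_apply]
  unfold s t
  rw [Equiv.swap_apply_of_ne_of_ne, Equiv.swap_apply_of_ne_of_ne] <;>
    exact pos_ne' (by omega) (by omega) (by omega) (by omega) (by omega)

lemma D_exchange (n : ℕ)
    (ih : ∀ w : Equiv.Perm (Fin N), len w < n → ∀ i, 1 ≤ i → i < N → Desc w i →
      ∀ f, D w f = D (w * s N i) (divDiff i f))
    (w : Equiv.Perm (Fin N)) (hw : len w = n) (i j : ℕ) (h1 : 1 ≤ i) (hij : i < j)
    (hj : j < N) (di : Desc w i) (dj : Desc w j) (f : MvPolynomial (Fin N) ℤ) :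
    D (w * s N i) (divDiff i f) = D (w * s N j) (divDiff j f) := by
  have li := len_desc w h1 (by omega) di
  have lj := len_desc w (by omega) hj dj
  by_cases hc : i + 2 ≤ j
  · rw [ih (w * s N i) (by omega) j (by omega) hj
      ((desc_comm w h1 (by omega) (by omega) hj (by omega)).mpr dj),
      ih (w * s N j) (by omega) i h1 (by omega)
      ((desc_comm w (by omega) hj h1 (by omega) (by omega)).mpr di),
      dd_comm h1 hc hj, mul_assoc, mul_assoc, s_comm h1 hc hj]
  · obtain rfl : j = i + 1 := by omega
    have n1 : pos N i ≠ pos N (i + 1) :=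
      pos_ne' (by omega) (by omega) (by omega) (by omega) (by omega)
    have n2 : pos N i ≠ pos N (i + 1 + 1) :=
      pos_ne' (by omega) (by omega) (by omega) (by omega) (by omega)
    have n3 : pos N (i + 1) ≠ pos N (i + 1 + 1) :=
      pos_ne' (by omega) (by omega) (by omega) (by omega) (by omega)
    have al : s N i (pos N i) = pos N (i + 1) := Equiv.swap_apply_left _ _
    have ar : s N i (pos N (i + 1)) = pos N i := Equiv.swap_apply_right _ _
    have an : s N i (pos N (i + 1 + 1)) = pos N (i + 1 + 1) :=
      Equiv.swap_apply_of_ne_of_ne n2.symm n3.symm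
    have bl : s N (i + 1) (pos N (i + 1)) = pos N (i + 1 + 1) := Equiv.swap_apply_left _ _
    have br : s N (i + 1) (pos N (i + 1 + 1)) = pos N (i + 1) := Equiv.swap_apply_right _ _
    have bn : s N (i + 1) (pos N i) = pos N i := Equiv.swap_apply_of_ne_of_ne n1 n2
    have d1 : Desc (w * s N i) (i + 1) := by
      unfold Desc at *
      simp only [Equiv.Perm.mul_apply, ar, an]
      exact dj.trans di
    have d2 : Desc (w * s N i * s N (i + 1)) i := by
      unfold Desc at *
      simp only [Equiv.Perm.mul_apply, al, an, bl, bn]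
      exact dj
    have d3 : Desc (w * s N (i + 1)) i := by
      unfold Desc at *
      simp only [Equiv.Perm.mul_apply, bl, bn]
      exact dj.trans di
    have d4 : Desc (w * s N (i + 1) * s N i) (i + 1) := by
      unfold Desc at *
      simp only [Equiv.Perm.mul_apply, ar, an, br, bn]
      exact di
    have l1 := len_desc _ (by omega) (by omega) d1
    have l3 := len_desc _ (by omega) (by omega) d3
    rw [ih (w * s N i) (by omega) (i + 1) (by omega) hj d1,
      ih (w * s N i * s N (i + 1)) (by omega) i (by omega) (by omega) d2,
      ih (w * s N (i + 1)) (by omega) i (by omega) (by omega) d3,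
      ih (w * s N (i + 1) * s N i) (by omega) (i + 1) (by omega) hj d4,
      dd_braid h1 hj]
    congr 1
    have := s_braid h1 hj
    rw [mul_assoc, mul_assoc, mul_assoc, mul_assoc, ← mul_assoc (s N i), this,
      mul_assoc]

lemma D_desc_aux (n : ℕ) : ∀ w : Equiv.Perm (Fin N), len w < n → ∀ i, 1 ≤ i → i < N →
    Desc w i → ∀ f, D w f = D (w * s N i) (divDiff i f) := by
  induction n with
  | zero => intro w hw; omega
  | succ n ih =>
    intro w hw j h1 hj dj f
    have hlj := len_desc w h1 hj dj
    have hw1 : w ≠ 1 := by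
      rintro rfl
      rw [len_one] at hlj; omega
    obtain ⟨i, hi1, hi2, di, hD⟩ := D_first w hw1
    rw [hD]
    have ih' : ∀ w' : Equiv.Perm (Fin N), len w' < len w → ∀ i, 1 ≤ i → i < N →
      Desc w' i → ∀ f, D w' f = D (w' * s N i) (divDiff i f) :=
      fun w' hw' => ih w' (by omega)
    rcases lt_trichotomy i j with hij | rfl | hij
    · exact D_exchange (len w) ih' w rfl i j hi1 hij hj di dj f
    · rfl
    · exact (D_exchange (len w) ih' w rfl j i h1 hij hi2 dj di f).symm

lemma D_desc (w : Equiv.Perm (Fin N)) {i : ℕ} (h1 : 1 ≤ i) (h : i < N) (hd : Desc w i)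
    (f : MvPolynomial (Fin N) ℤ) : D w f = D (w * s N i) (divDiff i f) :=
  D_desc_aux (len w + 1) w (by omega) i h1 h hd f

/-- Induction principle: remove descents. -/
lemma perm_induction {P : Equiv.Perm (Fin N) → Prop} (one : P 1)
    (step : ∀ w i, 1 ≤ i → i < N → Desc w i → P (w * s N i) → P w) (w) : P w := by
  induction hn : len w using Nat.strong_induction_on generalizing w with
  | _ n ih =>
    by_cases hw : w = 1
    · rw [hw]; exact one
    · obtain ⟨i, h1, h2, h3⟩ := exists_desc w hw
      have hl := len_desc w h1 h2 h3
      exact step w i h1 h2 h3 (ih _ (by omega) _ rfl)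

lemma D_add (w : Equiv.Perm (Fin N)) : ∀ f g, D w (f + g) = D w f + D w g := by
  induction w using perm_induction with
  | one => intro f g; simp only [D_one]
  | step w i h1 h2 hd ih =>
    intro f g
    rw [D_desc w h1 h2 hd, D_desc w h1 h2 hd, D_desc w h1 h2 hd, dd_add h1 h2, ih]

/-- `∂_w` as an additive homomorphism. -/
noncomputable def DH (w : Equiv.Perm (Fin N)) :
    MvPolynomial (Fin N) ℤ →+ MvPolynomial (Fin N) ℤ := AddMonoidHom.mk' (D w) (D_add w)

lemma DH_apply (w : Equiv.Perm (Fin N)) (f) : DH w f = D w f := rfl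

lemma D_zero (w : Equiv.Perm (Fin N)) : D w 0 = 0 := (DH w).map_zero

lemma D_dd_desc (w : Equiv.Perm (Fin N)) {i : ℕ} (h1 : 1 ≤ i) (h : i < N) (hd : Desc w i)
    (f : MvPolynomial (Fin N) ℤ) : D w (divDiff i f) = 0 := by
  rw [D_desc w h1 h hd, dd_dd h1 h, D_zero]

lemma D_dd_asc (w : Equiv.Perm (Fin N)) {i : ℕ} (h1 : 1 ≤ i) (h : i < N) (hd : ¬ Desc w i)
    (f : MvPolynomial (Fin N) ℤ) : D w (divDiff i f) = D (w * s N i) f := by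
  rw [D_desc (w * s N i) h1 h ((desc_s w h1 h).mpr hd), mul_s_s]

lemma len_mul_le (u v : Equiv.Perm (Fin N)) : len (u * v) ≤ len u + len v := by
  induction v using perm_induction with
  | one => simp
  | step v i h1 h2 hd ih =>
    have hl := len_desc v h1 h2 hd
    by_cases hd' : Desc (u * v) i
    · have := len_desc (u * v) h1 h2 hd'
      rw [mul_assoc] at this; omega
    · have := len_not_desc (u * v) h1 h2 hd'
      rw [mul_assoc] at this; omega

lemma D_mul (u v : Equiv.Perm (Fin N)) : ∀ f, D u (D v f) =
    if len (u * v) = len u + len v then D (u * v) f else 0 := by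
  induction v using perm_induction with
  | one => intro f; simp [D_one, len_one]
  | step v i h1 h2 hd ih =>
    intro f
    have hl := len_desc v h1 h2 hd
    have hle := len_mul_le u (v * s N i)
    rw [D_desc v h1 h2 hd, ih, ← mul_assoc]
    rw [← mul_assoc] at hle
    by_cases hd' : Desc (u * v) i
    · have h3 := len_desc (u * v) h1 h2 hd'
      rw [D_desc (u * v) h1 h2 hd']
      congr 1
      apply propext
      omega
    · have h3 := len_not_desc (u * v) h1 h2 hd'
      rw [D_dd_desc _ h1 h2 ((desc_s (u * v) h1 h2).mpr hd'), ite_self,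
        if_neg (by omega)]

lemma D_homog (u : Equiv.Perm (Fin N)) : ∀ (f : MvPolynomial (Fin N) ℤ) (d : ℕ),
    f.IsHomogeneous d → (len u ≤ d → (D u f).IsHomogeneous (d - len u)) ∧
      (d < len u → D u f = 0) := by
  induction u using perm_induction with
  | one => intro f d hf; simp [D_one, len_one, hf]
  | step u i h1 h2 hd ih =>
    intro f d hf
    have hl := len_desc u h1 h2 hd
    rw [D_desc u h1 h2 hd]
    cases d with
    | zero =>
      rw [dd_homog0 h1 h2 hf, D_zero]
      exact ⟨fun _ => isHomogeneous_zero _ _ _, fun _ => rfl⟩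
    | succ d =>
      obtain ⟨a, b⟩ := ih _ d (dd_homog' h1 h2 hf)
      refine ⟨fun h => ?_, fun h => b (by omega)⟩
      have := a (by omega)
      rwa [show d + 1 - len u = d - len (u * s N i) by omega]

lemma D_eps (u : Equiv.Perm (Fin N)) (f : MvPolynomial (Fin N) ℤ) (d : ℕ)
    (hf : f.IsHomogeneous d) (h : constantCoeff (D u f) ≠ 0) : d = len u := by
  obtain ⟨a, b⟩ := D_homog u f d hf
  rcases lt_trichotomy d (len u) with h1 | h1 | h1
  · rw [b h1] at h; simp at h
  · exact h1
  · exfalso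
    apply h
    rw [constantCoeff_eq]
    apply (a h1.le).coeff_eq_zero
    simp; omega

lemma D_symm (u : Equiv.Perm (Fin N)) (f : MvPolynomial (Fin N) ℤ) (hf : f.IsSymmetric) :
    ∀ g, D u (f * g) = f * D u g := by
  induction u using perm_induction with
  | one => intro g; simp only [D_one]
  | step u i h1 h2 hd ih =>
    intro g
    rw [D_desc u h1 h2 hd, D_desc u h1 h2 hd, dd_mul h1 h2,
      dd_zero_of_act h1 h2 (hf (s N i)), show act i f = f from hf (s N i), zero_mul, zero_add, ih]

lemma D_symIdeal (u : Equiv.Perm (Fin N)) (f : MvPolynomial (Fin N) ℤ) (hf : f ∈ symIdeal N) :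
    constantCoeff (D u f) = 0 := by
  unfold symIdeal at hf
  induction hf using Submodule.span_induction with
  | mem x hx =>
    have := D_symm u x hx.1 1
    rw [mul_one] at this
    rw [this, map_mul, hx.2, zero_mul]
  | zero => rw [D_zero, map_zero]
  | add x y _ _ hx hy => rw [D_add, map_add, hx, hy, add_zero]
  | smul a x hx' hx =>
    -- strengthen: the image of the ideal lies in the ideal
    have key : ∀ y ∈ Ideal.span {f : MvPolynomial (Fin N) ℤ | f.IsSymmetric ∧
        constantCoeff f = 0}, ∀ b, constantCoeff (D u (b * y)) = 0 := by
      intro y hy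
      induction hy using Submodule.span_induction with
      | mem x hx => intro b; rw [mul_comm, D_symm u x hx.1, map_mul, hx.2, zero_mul]
      | zero => intro b; rw [mul_zero, D_zero, map_zero]
      | add x y _ _ hx hy => intro b; rw [mul_add, D_add, map_add, hx, hy, add_zero]
      | smul c x _ hx => intro b; rw [smul_eq_mul, ← mul_assoc]; exact hx _
    exact key x hx' a

end DOp


/-! ### Duality -/

section Dual

variable {N : ℕ} [NeZero N]

/-- A monomial with exponent function `a` (0-indexed). -/
noncomputable def mono (N : ℕ) (a : ℕ → ℕ) : MvPolynomial (Fin N) ℤ :=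
  ∏ j : Fin N, X j ^ (a j)

lemma mono_homog (a : ℕ → ℕ) : (mono N a).IsHomogeneous (∑ j : Fin N, a j) := by
  unfold mono
  apply IsHomogeneous.prod
  intro j _
  exact isHomogeneous_X_pow j (a j)

lemma dd_mono (a : ℕ → ℕ) (i : ℕ) (hi : i + 1 < N) (ha : a i = a (i + 1) + 1) :
    divDiff (i + 1) (mono N a) = mono N (Function.update a i (a i - 1)) := by
  have p1 : ((pos N (i + 1) : Fin N) : ℕ) = i := by rw [pos_val (by omega) (by omega)]; omega
  have p2 : ((pos N (i + 1 + 1) : Fin N) : ℕ) = i + 1 := by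
    rw [pos_val (by omega) (by omega)]; omega
  set b := Function.update a i (a i - 1) with hb
  have bi : b i = a (i + 1) := by simp [hb, ha]
  have bi1 : b (i + 1) = a (i + 1) := by simp [hb]
  have hbne : ∀ j, j ≠ i → b j = a j := fun j hj => by simp [hb, hj]
  have hmul : mono N a = X (pos N (i + 1)) * mono N b := by
    unfold mono
    rw [← Finset.mul_prod_erase Finset.univ _ (Finset.mem_univ (pos N (i + 1))),
      ← Finset.mul_prod_erase Finset.univ (fun j : Fin N => (X j : MvPolynomial (Fin N) ℤ) ^ b j)
        (Finset.mem_univ (pos N (i + 1))), ← mul_assoc]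
    congr 1
    · rw [p1, bi, ha, pow_succ']
    · apply Finset.prod_congr rfl
      intro j hj
      rw [hbne]
      intro e
      apply (Finset.mem_erase.mp hj).1
      ext; rw [p1, e]
  have hinv : act (i + 1) (mono N b) = mono N b := by
    unfold mono act
    rw [map_prod]
    simp only [map_pow, rename_X]
    rw [← Equiv.prod_comp (s N (i + 1)) (fun j : Fin N => (X j : MvPolynomial (Fin N) ℤ) ^ b j)]
    apply Finset.prod_congr rfl
    intro j _
    congr 1
    unfold s t
    rw [Equiv.swap_apply_def]
    split_ifs with h1 h2
    · rw [h1, p1, p2, bi, bi1]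
    · rw [h2, p1, p2, bi, bi1]
    · rfl
  have hX : divDiff (i + 1) (X (pos N (i + 1)) : MvPolynomial (Fin N) ℤ) = 1 := by
    apply dd_unique (by omega) hi
    rw [act_X_l, mul_one]
  rw [hmul, dd_mul (by omega) hi, hX, dd_zero_of_act (by omega) hi hinv]
  ring

lemma exists_D_mono (d : ℕ) : ∀ a : ℕ → ℕ, ∑ j : Fin N, a j = d →
    (∀ i, i + 1 < N → a (i + 1) ≤ a i ∧ a i ≤ a (i + 1) + 1) → a (N - 1) = 0 →
    ∃ u : Equiv.Perm (Fin N), D u (mono N a) = 1 := by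
  induction d with
  | zero =>
    intro a ha _ _
    refine ⟨1, ?_⟩
    rw [D_one]
    unfold mono
    apply Finset.prod_eq_one
    intro j hj
    rw [Finset.sum_eq_zero_iff.mp ha j hj, pow_zero]
  | succ d ih =>
    intro a ha hstep hlast
    have hN : 0 < N := Nat.pos_of_ne_zero (NeZero.ne N)
    have hex : ∃ i, i + 1 < N ∧ a (i + 1) < a i := by
      by_contra hc
      push Not at hc
      have hz : ∀ e, e < N → a (N - 1 - e) = 0 := by
        intro e
        induction e with
        | zero => intro _; simpa using hlast
        | succ e ihe =>
          intro he
          have h1 := ihe (by omega)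
          have h2 := hc (N - 1 - (e + 1)) (by omega)
          rw [show N - 1 - (e + 1) + 1 = N - 1 - e by omega] at h2
          omega
      have : ∑ j : Fin N, a j = 0 := by
        apply Finset.sum_eq_zero
        intro j _
        have := hz (N - 1 - j) (by omega)
        rwa [show N - 1 - (N - 1 - (j : ℕ)) = j by omega] at this
      omega
    have hmin : ∀ i, i < Nat.find hex → ¬ (i + 1 < N ∧ a (i + 1) < a i) :=
      fun i hi => Nat.find_min hex hi
    obtain ⟨hi, hlt⟩ := Nat.find_spec hex
    set i := Nat.find hex with hidef
    have hai : a i = a (i + 1) + 1 := by have := hstep i hi; omega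
    set b := Function.update a i (a i - 1) with hb
    have bi : b i = a (i + 1) := by simp [hb, hai]
    have hbne : ∀ j, j ≠ i → b j = a j := fun j hj => by simp [hb, hj]
    have hsum : ∑ j : Fin N, b j = d := by
      have e1 : ∑ j : Fin N, a j = ∑ j : Fin N, (b j + if j = (⟨i, by omega⟩ : Fin N) then 1 else 0) := by
        apply Finset.sum_congr rfl
        intro j _
        by_cases hj : (j : ℕ) = i
        · rw [if_pos (Fin.ext hj), hj, bi, hai]
        · rw [if_neg (fun e => hj (congrArg Fin.val e)), hbne _ hj]; rfl
      rw [Finset.sum_add_distrib, Finset.sum_ite_eq' , ha] at e1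
      simp at e1
      omega
    obtain ⟨u, hu⟩ := ih b hsum (by
      intro j hj
      have h0 := hstep j hj
      by_cases h1 : j = i
      · rw [h1] at h0 ⊢
        rw [bi, hbne (i + 1) (by omega)]
        have := hstep i hi
        omega
      · by_cases h2 : j + 1 = i
        · have := hmin j (by omega)
          rw [h2, bi, hbne j h1]
          rw [h2] at h0 this
          omega
        · rw [hbne _ h1, hbne _ h2]; exact h0) (by
      rw [hbne _ (by omega)]; exact hlast)
    rw [← dd_mono a i hi hai] at hu
    by_cases hd : Desc u (i + 1)
    · rw [D_dd_desc u (by omega) hi hd] at hu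
      exact absurd hu zero_ne_one
    · rw [D_dd_asc u (by omega) hi hd] at hu
      exact ⟨_, hu⟩

lemma staircase_eq : staircase N = mono N (fun j => N - 1 - j) := rfl

lemma len_w0_sum : len (w0 N) = ∑ j : Fin N, (N - 1 - (j : ℕ)) := by
  rw [len_w0, Finset.card_filter, ← Finset.univ_product_univ, Finset.sum_product]
  apply Finset.sum_congr rfl
  intro p _
  rw [← Finset.card_filter]
  have : (Finset.univ.filter fun q : Fin N => p < q) = Finset.Ioi p := by ext; simp
  rw [this, Fin.card_Ioi]

lemma staircase_homog : (staircase N).IsHomogeneous (len (w0 N)) := by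
  rw [len_w0_sum, staircase_eq]
  exact mono_homog _

lemma D_w0 : D (w0 N) (staircase N) = 1 := by
  obtain ⟨u, hu⟩ := exists_D_mono (N := N) _ (fun j => N - 1 - j) rfl
    (fun i hi => by omega) (by omega)
  rw [← staircase_eq] at hu
  have := D_eps u _ _ staircase_homog (by rw [hu]; simp)
  rw [eq_w0_of_len u this.symm] at hu
  exact hu

lemma sch_eq (w : Equiv.Perm (Fin N)) : schubertPoly N w = D (w⁻¹ * w0 N) (staircase N) := rfl

lemma len_sch (w : Equiv.Perm (Fin N)) : len (w⁻¹ * w0 N) + len w = len (w0 N) := by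
  have := len_mul_w0 w⁻¹
  rwa [len_inv] at this

lemma sch_homog (w : Equiv.Perm (Fin N)) : (schubertPoly N w).IsHomogeneous (len w) := by
  have h := len_sch w
  have := (D_homog (w⁻¹ * w0 N) _ _ staircase_homog).1 (by omega)
  rwa [show len (w0 N) - len (w⁻¹ * w0 N) = len w by omega] at this

lemma D_sch_same (w : Equiv.Perm (Fin N)) : D w (schubertPoly N w) = 1 := by
  have h := len_sch w
  rw [sch_eq, D_mul, mul_inv_cancel_left, if_pos (by omega), D_w0]

lemma D_sch_ne (u v : Equiv.Perm (Fin N)) (huv : u ≠ v) (hl : len v ≤ len u) :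
    D u (schubertPoly N v) = 0 := by
  have h := len_sch v
  rw [sch_eq, D_mul, if_neg]
  intro e
  have h2 := len_mul_w0 (u * (v⁻¹ * w0 N))
  have h3 := eq_w0_of_len (u * (v⁻¹ * w0 N)) (by omega)
  rw [← mul_assoc] at h3
  have h4 : u * v⁻¹ = 1 := mul_right_cancel (h3.trans (one_mul _).symm)
  exact huv (mul_inv_eq_one.mp h4)

lemma eps_D_sch (u v : Equiv.Perm (Fin N)) :
    constantCoeff (D u (schubertPoly N v)) = if v = u then 1 else 0 := by
  split_ifs with h
  · rw [h, D_sch_same]; simp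
  · by_contra hc
    have := D_eps u _ _ (sch_homog v) hc
    rw [D_sch_ne u v (Ne.symm h) this.le] at hc
    simp at hc

lemma D_indep (c : Equiv.Perm (Fin N) → MvPolynomial (Fin N) ℤ)
    (h : ∀ g, ∑ w, c w * D w g = 0) (w : Equiv.Perm (Fin N)) : c w = 0 := by
  induction hn : len w using Nat.strong_induction_on generalizing w with
  | _ n ih =>
    have := h (schubertPoly N w)
    rw [Finset.sum_eq_single w] at this
    · rwa [D_sch_same, mul_one] at this
    · intro v _ hv
      by_cases hl : len w ≤ len v
      · rw [D_sch_ne v w hv hl, mul_zero]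
      · rw [ih (len v) (by omega) v rfl, zero_mul]
    · intro hh; exact absurd (Finset.mem_univ _) hh

lemma D_indep' (c c' : Equiv.Perm (Fin N) → MvPolynomial (Fin N) ℤ)
    (h : ∀ g, ∑ w, c w * D w g = ∑ w, c' w * D w g) (w : Equiv.Perm (Fin N)) : c w = c' w := by
  have := D_indep (fun w => c w - c' w) (fun g => by
    simp only [sub_mul, Finset.sum_sub_distrib, h, sub_self]) w
  exact sub_eq_zero.mp this

/-- Right multiplication by `∂_i` of an expansion. -/
lemma sum_D_dd {i : ℕ} (h1 : 1 ≤ i) (h : i < N)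
    (c : Equiv.Perm (Fin N) → MvPolynomial (Fin N) ℤ) (g : MvPolynomial (Fin N) ℤ) :
    ∑ w, c w * D w (divDiff i g) =
      ∑ w, (if Desc w i then c (w * s N i) else 0) * D w g := by
  rw [← Equiv.sum_comp (Equiv.mulRight (s N i))
    (fun w => (if Desc w i then c (w * s N i) else 0) * D w g)]
  apply Finset.sum_congr rfl
  intro w _
  simp only [Equiv.coe_mulRight, mul_s_s]
  by_cases hd : Desc w i
  · rw [D_dd_desc w h1 h hd, if_neg (by rw [desc_s w h1 h]; simpa using hd), mul_zero, zero_mul]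
  · rw [D_dd_asc w h1 h hd, if_pos ((desc_s w h1 h).mpr hd)]

lemma exists_expand (u : Equiv.Perm (Fin N)) : ∀ f : MvPolynomial (Fin N) ℤ,
    ∃ c : Equiv.Perm (Fin N) → MvPolynomial (Fin N) ℤ,
      (∀ g, D u (f * g) = ∑ w, c w * D w g) ∧ ∀ w, c w ≠ 0 → len w < len u ∨ w = u := by
  induction u using perm_induction with
  | one =>
    intro f
    refine ⟨fun w => if w = 1 then f else 0, fun g => ?_, fun w hw => ?_⟩
    · simp [D_one]
    · right; by_contra hc; simp [hc] at hw
  | step u i h1 h2 hd ih =>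
    intro f
    have hl := len_desc u h1 h2 hd
    obtain ⟨c1, hc1, hs1⟩ := ih (divDiff i f)
    obtain ⟨c2, hc2, hs2⟩ := ih (act i f)
    refine ⟨fun w => c1 w + if Desc w i then c2 (w * s N i) else 0, fun g => ?_, fun w hw => ?_⟩
    · rw [D_desc u h1 h2 hd, dd_mul h1 h2, D_add, hc1, hc2, sum_D_dd h1 h2,
        ← Finset.sum_add_distrib]
      simp only [add_mul]
    · beta_reduce at hw
      by_cases hw1 : c1 w = 0
      · rw [hw1, zero_add] at hw
        by_cases hdw : Desc w i
        · rw [if_pos hdw] at hw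
          have hlw := len_desc w h1 h2 hdw
          rcases hs2 _ hw with h | h
          · left; omega
          · right; exact mul_right_cancel h
        · rw [if_neg hdw] at hw; exact absurd rfl hw
      · left
        rcases hs1 w hw1 with h | h
        · omega
        · rw [h]; omega

/-- The coefficient of `∂_w` in `∂_u ∘ f`. -/
noncomputable def cf (f : MvPolynomial (Fin N) ℤ) (u w : Equiv.Perm (Fin N)) :
    MvPolynomial (Fin N) ℤ := (exists_expand u f).choose w

lemma cf_spec (f : MvPolynomial (Fin N) ℤ) (u : Equiv.Perm (Fin N)) (g) :
    D u (f * g) = ∑ w, cf f u w * D w g := (exists_expand u f).choose_spec.1 g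

lemma cf_supp (f : MvPolynomial (Fin N) ℤ) (u w : Equiv.Perm (Fin N)) (h : cf f u w ≠ 0) :
    len w < len u ∨ w = u := (exists_expand u f).choose_spec.2 w h

/-- A linear form. -/
noncomputable def Lin (l : Fin N → ℤ) : MvPolynomial (Fin N) ℤ := ∑ a, C (l a) * X a

lemma rename_Lin (l : Fin N → ℤ) (σ : Equiv.Perm (Fin N)) :
    rename (⇑σ) (Lin l) = Lin (l ∘ ⇑σ⁻¹) := by
  unfold Lin
  rw [map_sum, ← Equiv.sum_comp σ (fun a => C ((l ∘ ⇑σ⁻¹) a) * X a)]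
  apply Finset.sum_congr rfl
  intro a _
  simp

lemma Lin_injective : Function.Injective (Lin : (Fin N → ℤ) → MvPolynomial (Fin N) ℤ) := by
  intro l l' h
  funext a
  have := congrArg (eval (Pi.single a (1 : ℤ))) h
  unfold Lin at this
  simpa [map_sum, Pi.single_apply] using this

lemma dd_Lin {i : ℕ} (h1 : 1 ≤ i) (h : i < N) (l : Fin N → ℤ) :
    divDiff i (Lin l) = C (l (pos N i) - l (pos N (i + 1))) := by
  apply dd_unique h1 h
  unfold act
  rw [rename_Lin, s_inv]
  unfold Lin
  rw [← Finset.sum_sub_distrib, ← Finset.sum_subset (Finset.subset_univ {pos N i, pos N (i + 1)})]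
  · rw [Finset.sum_pair (pos_ne h1 h)]
    have al : s N i (pos N i) = pos N (i + 1) := Equiv.swap_apply_left _ _
    have ar : s N i (pos N (i + 1)) = pos N i := Equiv.swap_apply_right _ _
    simp only [Function.comp, al, ar, map_sub]
    ring
  · intro x _ hx
    simp only [Finset.mem_insert, Finset.mem_singleton, not_or] at hx
    have : s N i x = x := Equiv.swap_apply_of_ne_of_ne hx.1 hx.2
    simp [this]

lemma monk (u : Equiv.Perm (Fin N)) : ∀ l : Fin N → ℤ,
    ∃ c : Equiv.Perm (Fin N) → MvPolynomial (Fin N) ℤ,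
      (∀ g, D u (Lin l * g) = Lin (l ∘ ⇑u⁻¹) * D u g + ∑ w, c w * D w g) ∧
      ∀ w, c w ≠ 0 → len w + 1 = len u ∧ ∃ a b, l a ≠ l b ∧ w = u * Equiv.swap a b := by
  induction u using perm_induction with
  | one =>
    intro l
    refine ⟨fun _ => 0, fun g => ?_, fun w hw => absurd rfl hw⟩
    simp [D_one]
  | step u i h1 h2 hd ih =>
    intro l
    have hl := len_desc u h1 h2 hd
    obtain ⟨c, hc, hs⟩ := ih (l ∘ ⇑(s N i))
    refine ⟨fun w => (if w = u * s N i then C (l (pos N i) - l (pos N (i + 1))) else 0) +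
      if Desc w i then c (w * s N i) else 0, fun g => ?_, fun w hw => ?_⟩
    · have e : (l ∘ ⇑(s N i)) ∘ ⇑(u * s N i)⁻¹ = l ∘ ⇑u⁻¹ := by
        rw [mul_inv_rev, s_inv]
        funext a
        simp only [Function.comp, Equiv.Perm.mul_apply]
        rw [← Equiv.Perm.mul_apply (s N i) (s N i), s_mul_s]; rfl
      have hCc : ∀ (r : ℤ) (x : Equiv.Perm (Fin N)) (p : MvPolynomial (Fin N) ℤ),
          D x (C r * p) = C r * D x p := fun r x p => D_symm x (C r) (IsSymmetric.C r) p
      rw [D_desc u h1 h2 hd, dd_mul h1 h2, dd_Lin h1 h2, D_add, hCc]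
      unfold act
      rw [rename_Lin, s_inv, hc, e, sum_D_dd h1 h2, D_dd_asc _ h1 h2
        (by rw [desc_s u h1 h2]; simpa using hd), mul_s_s]
      simp only [add_mul, Finset.sum_add_distrib, ite_mul, zero_mul, Finset.sum_ite_eq',
        Finset.mem_univ, if_true]
      ring
    · beta_reduce at hw
      by_cases hw1 : (if Desc w i then c (w * s N i) else 0) = 0
      · rw [hw1, add_zero] at hw
        by_cases hwu : w = u * s N i
        · rw [if_pos hwu] at hw
          refine ⟨by rw [hwu]; exact hl, pos N i, pos N (i + 1), ?_, hwu⟩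
          intro e
          rw [e, sub_self, map_zero] at hw
          exact hw rfl
        · rw [if_neg hwu] at hw; exact absurd rfl hw
      · by_cases hdw : Desc w i
        · rw [if_pos hdw] at hw1
          have hlw := len_desc w h1 h2 hdw
          obtain ⟨h3, a, b, hab, he⟩ := hs _ hw1
          refine ⟨by omega, s N i a, s N i b, hab, ?_⟩
          rw [Equiv.swap_apply_apply, s_inv, ← mul_assoc, ← mul_assoc, ← he, mul_s_s]
        · rw [if_neg hdw] at hw1; exact absurd rfl hw1

end Dual


/-! ### Multiplication by a `k`-Grassmannian class -/

section Grass

variable {N : ℕ} [NeZero N]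

/-- Indicator of the first `k` positions. -/
def ind (N k : ℕ) : Fin N → ℤ := fun a => if (a : ℕ) < k then 1 else 0

lemma ind_eq_iff (k : ℕ) (a b : Fin N) : ind N k a = ind N k b ↔ ((a : ℕ) < k ↔ (b : ℕ) < k) := by
  unfold ind
  by_cases ha : (a : ℕ) < k <;> by_cases hb : (b : ℕ) < k <;> simp [ha, hb]

lemma ind_s {k i : ℕ} (h1 : 1 ≤ i) (h : i < N) (hik : i ≠ k) (a : Fin N) :
    ind N k (s N i a) = ind N k a := by
  have p1 : ((pos N i : Fin N) : ℕ) = i - 1 := pos_val (by omega) (by omega)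
  have p2 : ((pos N (i + 1) : Fin N) : ℕ) = i + 1 - 1 := pos_val (by omega) (by omega)
  rw [ind_eq_iff]
  unfold s t
  rw [Equiv.swap_apply_def]
  split_ifs with h3 h4
  · rw [h3, p1, p2]; omega
  · rw [h4, p1, p2]; omega
  · rfl

lemma ind_s_inv {k i : ℕ} (h1 : 1 ≤ i) (h : i < N) (hik : i ≠ k) (u : Equiv.Perm (Fin N)) :
    ind N k ∘ ⇑(u * s N i)⁻¹ = ind N k ∘ ⇑u⁻¹ := by
  funext a
  rw [mul_inv_rev, s_inv]
  simp only [Function.comp, Equiv.Perm.mul_apply]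
  exact ind_s h1 h hik _

lemma block_lt {k : ℕ} (w : Equiv.Perm (Fin N))
    (hw : ∀ i, 1 ≤ i → i < N → i ≠ k → ¬ Desc w i) (a b : Fin N) (hab : a < b)
    (hl : ind N k a = ind N k b) : w a < w b := by
  rw [ind_eq_iff] at hl
  obtain ⟨i, hi1, hi2, rfl⟩ := exists_pos a
  obtain ⟨j, hj1, hj2, rfl⟩ := exists_pos b
  have hab' : ((pos N i : Fin N) : ℕ) < pos N j := hab
  rw [pos_val hi2 hi1, pos_val hj2 hj1] at hl hab'
  apply asc_block w i j hi1 (by omega) hj2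
  intro e he1 he2
  exact hw e (by omega) (by omega) (by omega)

lemma coset_min {k : ℕ} (u : Equiv.Perm (Fin N))
    (hu : ∀ i, 1 ≤ i → i < N → i ≠ k → ¬ Desc u i) (n : ℕ) : ∀ w : Equiv.Perm (Fin N),
    len w = n → ind N k ∘ ⇑u⁻¹ = ind N k ∘ ⇑w⁻¹ → w = u ∨ len u < len w := by
  induction n using Nat.strong_induction_on with
  | _ n ih =>
    intro w hn hcos
    by_cases hw : ∀ i, 1 ≤ i → i < N → i ≠ k → ¬ Desc w i
    · left
      have hσ : u⁻¹ * w = 1 := by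
        apply strictMono_eq_one
        have hl : ∀ a, ind N k ((u⁻¹ * w) a) = ind N k a := by
          intro a
          have := congrFun hcos (w a)
          simpa using this
        intro a b hab
        by_cases hlab : ind N k a = ind N k b
        · have hlt := block_lt w hw a b hab hlab
          by_contra hc
          rw [not_lt] at hc
          rcases hc.lt_or_eq with hc | hc
          · have := block_lt u hu _ _ hc (by rw [hl, hl, hlab])
            rw [← Equiv.Perm.mul_apply u, ← Equiv.Perm.mul_apply u, mul_inv_cancel_left] at this
            exact absurd this (not_lt.mpr hlt.le)
          · exact hab.ne' ((u⁻¹ * w).injective hc)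
        · have e1 := hl a
          have e2 := hl b
          rw [ind_eq_iff] at hlab e1 e2
          have : (a : ℕ) < b := hab
          show (((u⁻¹ * w) a : Fin N) : ℕ) < ((u⁻¹ * w) b : Fin N)
          omega
      exact (inv_mul_eq_one.mp hσ).symm
    · push Not at hw
      obtain ⟨i, h1, h2, hik, hd⟩ := hw
      right
      have hl := len_desc w h1 h2 hd
      rcases ih (len (w * s N i)) (by omega) _ rfl
        (by rw [ind_s_inv h1 h2 hik]; exact hcos) with h | h
      · rw [h] at hl; omega
      · omega

lemma cf_desc {k : ℕ} (f : MvPolynomial (Fin N) ℤ) {i : ℕ} (h1 : 1 ≤ i) (h : i < N)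
    (hf : divDiff i f = 0) (u w : Equiv.Perm (Fin N)) (hd : Desc u i) :
    cf f u w = if Desc w i then cf f (u * s N i) (w * s N i) else 0 := by
  have ha : act i f = f := by
    have := dd_spec i f
    rw [hf, mul_zero] at this
    exact (sub_eq_zero.mp this.symm).symm
  apply D_indep' (cf f u) (fun w => if Desc w i then cf f (u * s N i) (w * s N i) else 0)
  intro g
  rw [← cf_spec, D_desc u h1 h hd, dd_mul h1 h, hf, zero_mul, zero_add, ha, cf_spec,
    sum_D_dd h1 h]

lemma cf_coset {k : ℕ} (f : MvPolynomial (Fin N) ℤ)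
    (hf : ∀ i, 1 ≤ i → i < N → i ≠ k → divDiff i f = 0) (n : ℕ) :
    ∀ u w : Equiv.Perm (Fin N), len u = n → cf f u w ≠ 0 →
    ind N k ∘ ⇑u⁻¹ = ind N k ∘ ⇑w⁻¹ → w = u := by
  induction n using Nat.strong_induction_on with
  | _ n ih =>
    intro u w hn hne hcos
    by_cases hu : ∀ i, 1 ≤ i → i < N → i ≠ k → ¬ Desc u i
    · rcases coset_min u hu _ w rfl hcos with h | h
      · exact h
      · rcases cf_supp f u w hne with h' | h'
        · omega
        · exact h'
    · push Not at hu
      obtain ⟨i, h1, h2, hik, hd⟩ := hu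
      have hl := len_desc u h1 h2 hd
      rw [cf_desc (k := k) f h1 h2 (hf i h1 h2 hik) u w hd] at hne
      by_cases hdw : Desc w i
      · rw [if_pos hdw] at hne
        exact mul_right_cancel (ih (len (u * s N i)) (by omega) _ _ rfl hne
          (by rw [ind_s_inv h1 h2 hik, ind_s_inv h1 h2 hik]; exact hcos))
      · rw [if_neg hdw] at hne; exact absurd rfl hne

/-- Coefficients in Monk's rule. -/
noncomputable def mk (l : Fin N → ℤ) (u w : Equiv.Perm (Fin N)) : MvPolynomial (Fin N) ℤ :=
  (monk u l).choose w

lemma mk_spec (l : Fin N → ℤ) (u : Equiv.Perm (Fin N)) (g) :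
    D u (Lin l * g) = Lin (l ∘ ⇑u⁻¹) * D u g + ∑ w, mk l u w * D w g :=
  (monk u l).choose_spec.1 g

lemma mk_supp (l : Fin N → ℤ) (u w : Equiv.Perm (Fin N)) (h : mk l u w ≠ 0) :
    len w + 1 = len u ∧ ∃ a b, l a ≠ l b ∧ w = u * Equiv.swap a b :=
  (monk u l).choose_spec.2 w h

lemma cf_rec (f : MvPolynomial (Fin N) ℤ) (l : Fin N → ℤ) (u w : Equiv.Perm (Fin N)) :
    cf f u w * Lin (l ∘ ⇑w⁻¹) + ∑ v, cf f u v * mk l v w =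
      Lin (l ∘ ⇑u⁻¹) * cf f u w + ∑ v, mk l u v * cf f v w := by
  apply D_indep' (fun w => cf f u w * Lin (l ∘ ⇑w⁻¹) + ∑ v, cf f u v * mk l v w)
    (fun w => Lin (l ∘ ⇑u⁻¹) * cf f u w + ∑ v, mk l u v * cf f v w)
  intro g
  have e1 : ∑ w, (cf f u w * Lin (l ∘ ⇑w⁻¹) + ∑ v, cf f u v * mk l v w) * D w g =
      D u (f * (Lin l * g)) := by
    rw [cf_spec]
    simp only [mk_spec, mul_add, add_mul, Finset.sum_add_distrib, Finset.mul_sum, Finset.sum_mul]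
    congr 1
    · simp only [mul_assoc]
    · rw [Finset.sum_comm]
      simp only [mul_assoc]
  have e2 : ∑ w, (Lin (l ∘ ⇑u⁻¹) * cf f u w + ∑ v, mk l u v * cf f v w) * D w g =
      D u (Lin l * (f * g)) := by
    rw [mk_spec]
    simp only [cf_spec, mul_add, add_mul, Finset.sum_add_distrib, Finset.mul_sum, Finset.sum_mul]
    congr 1
    · simp only [mul_assoc]
    · rw [Finset.sum_comm]
      simp only [mul_assoc]
  rw [e1, e2]
  congr 1
  ring

lemma kCover_of_mk {k : ℕ} (u w : Equiv.Perm (Fin N)) (h : mk (ind N k) u w ≠ 0) :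
    kCover N k w u := by
  obtain ⟨hl, a, b, hab, rfl⟩ := mk_supp _ _ _ h
  have key : ∀ a b : Fin N, (a : ℕ) < k → ¬ (b : ℕ) < k → len (u * Equiv.swap a b) + 1 = len u →
      kCover N k (u * Equiv.swap a b) u := by
    intro a b ha hb hl
    obtain ⟨i, hi1, hi2, rfl⟩ := exists_pos a
    obtain ⟨j, hj1, hj2, rfl⟩ := exists_pos b
    rw [pos_val hi2 hi1] at ha
    rw [pos_val hj2 hj1] at hb
    refine ⟨i, j, hi1, by omega, by omega, hj2, ?_, hl.symm⟩
    unfold t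
    rw [mul_assoc, Equiv.swap_mul_self, mul_one]
  rw [Ne, ind_eq_iff] at hab
  by_cases ha : (a : ℕ) < k
  · exact key a b ha (by tauto) hl
  · rw [Equiv.swap_comm] at hl ⊢
    exact key b a (by tauto) ha hl

lemma cf_chain {k : ℕ} (f : MvPolynomial (Fin N) ℤ)
    (hf : ∀ i, 1 ≤ i → i < N → i ≠ k → divDiff i f = 0) (n : ℕ) :
    ∀ u w : Equiv.Perm (Fin N), len u = len w + n → cf f u w ≠ 0 →
    Relation.ReflTransGen (kCover N k) w u := by
  induction n with
  | zero =>
    intro u w hn hne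
    rcases cf_supp f u w hne with h | h
    · omega
    · rw [h]
  | succ n ih =>
    intro u w hn hne
    have hlin : Lin (ind N k ∘ ⇑u⁻¹) ≠ Lin (ind N k ∘ ⇑w⁻¹) := by
      intro e
      have := cf_coset f hf _ u w rfl hne (Lin_injective e)
      rw [this] at hn; omega
    have hrec := cf_rec f (ind N k) u w
    have hex : (∃ v, cf f u v * mk (ind N k) v w ≠ 0) ∨ ∃ v, mk (ind N k) u v * cf f v w ≠ 0 := by
      by_contra hc
      push Not at hc
      rw [Finset.sum_eq_zero (fun v _ => hc.1 v), Finset.sum_eq_zero (fun v _ => hc.2 v),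
        add_zero, add_zero, mul_comm] at hrec
      exact hlin (mul_right_cancel₀ hne hrec).symm
    rcases hex with ⟨v, hv⟩ | ⟨v, hv⟩
    · have h1 := kCover_of_mk v w (right_ne_zero_of_mul hv)
      have h2 := (mk_supp _ _ _ (right_ne_zero_of_mul hv)).1
      exact Relation.ReflTransGen.head h1 (ih u v (by omega) (left_ne_zero_of_mul hv))
    · have h1 := kCover_of_mk u v (left_ne_zero_of_mul hv)
      have h2 := (mk_supp _ _ _ (left_ne_zero_of_mul hv)).1
      exact Relation.ReflTransGen.tail (ih v w (by omega) (right_ne_zero_of_mul hv)) h1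

lemma rPerm_apply (k : ℕ) (hk : 1 ≤ k) (m : ℕ) : k + m ≤ N → ∀ x : Fin N,
    ((rPerm N k m x : Fin N) : ℕ) = if (x : ℕ) = k - 1 then k - 1 + m else
      if k - 1 < (x : ℕ) ∧ (x : ℕ) ≤ k - 1 + m then (x : ℕ) - 1 else x := by
  induction m with
  | zero =>
    intro _ x
    simp only [rPerm, List.range_zero, List.map_nil, List.prod_nil, Equiv.Perm.one_apply]
    split_ifs <;> omega
  | succ m ih =>
    intro hN x
    have e : rPerm N k (m + 1) = rPerm N k m * t N k (k + 1 + m) := by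
      simp [rPerm, List.range_succ]
    have p1 : ((pos N k : Fin N) : ℕ) = k - 1 := pos_val (by omega) (by omega)
    have p2 : ((pos N (k + 1 + m) : Fin N) : ℕ) = k + 1 + m - 1 := pos_val (by omega) (by omega)
    rw [e, Equiv.Perm.mul_apply, ih (by omega)]
    unfold t
    rw [Equiv.swap_apply_def]
    by_cases h1 : x = pos N k
    · rw [if_pos h1, h1, p1, p2]
      split_ifs <;> omega
    · have h1' : (x : ℕ) ≠ k - 1 := fun h => h1 (Fin.ext (h.trans p1.symm))
      rw [if_neg h1]
      by_cases h2 : x = pos N (k + 1 + m)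
      · rw [if_pos h2, h2, p1, p2]
        split_ifs <;> omega
      · have h2' : (x : ℕ) ≠ k + 1 + m - 1 := fun h => h2 (Fin.ext (h.trans p2.symm))
        rw [if_neg h2]
        split_ifs <;> omega

lemma len_rPerm (k m : ℕ) (hk : 1 ≤ k) (hN : k + m ≤ N) : len (rPerm N k m) = m := by
  by_cases hm : m = 0
  · subst hm
    simp [rPerm, len_one]
  have p1 : ((pos N k : Fin N) : ℕ) = k - 1 := pos_val (by omega) (by omega)
  have p2 : ((pos N (k + m) : Fin N) : ℕ) = k + m - 1 := pos_val (by omega) (by omega)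
  have e : invSet (rPerm N k m) =
      (Finset.Ioc (pos N k) (pos N (k + m))).image (fun j => (pos N k, j)) := by
    ext ⟨p, q⟩
    rw [mem_invSet]
    simp only [Finset.mem_image, Finset.mem_Ioc, Prod.mk.injEq, Fin.lt_def, Fin.le_def,
      rPerm_apply k hk m hN, p1, p2]
    constructor
    · intro h
      have hp : (p : ℕ) = k - 1 := by
        by_contra hc
        obtain ⟨h3, h4⟩ := h
        split_ifs at h4 <;> omega
      refine ⟨q, ⟨?_, ?_⟩, Fin.ext (p1.trans hp.symm), rfl⟩
      · omega
      · obtain ⟨h3, h4⟩ := h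
        split_ifs at h4 <;> omega
    · rintro ⟨j, ⟨h1, h2⟩, h3, rfl⟩
      rw [← h3, p1]
      refine ⟨h1, ?_⟩
      split_ifs <;> omega
  rw [len_eq, e, Finset.card_image_of_injective _ (fun a b h => (Prod.mk.inj h).2), Fin.card_Ioc,
    p1, p2]
  omega

lemma rPerm_not_desc (k m i : ℕ) (hk : 1 ≤ k) (hN : k + m ≤ N) (h1 : 1 ≤ i) (h : i < N)
    (hik : i ≠ k) : ¬ Desc (rPerm N k m) i := by
  have p1 : ((pos N i : Fin N) : ℕ) = i - 1 := pos_val (by omega) (by omega)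
  have p2 : ((pos N (i + 1) : Fin N) : ℕ) = i + 1 - 1 := pos_val (by omega) (by omega)
  unfold Desc
  rw [Fin.lt_def, rPerm_apply k hk m hN, rPerm_apply k hk m hN, p1, p2]
  split_ifs <;> omega

lemma dd_eq_D {i : ℕ} (h1 : 1 ≤ i) (h : i < N) (f : MvPolynomial (Fin N) ℤ) :
    divDiff i f = D (s N i) f := by
  have hd : Desc (s N i) i := by
    have := desc_s (1 : Equiv.Perm (Fin N)) h1 h
    rw [one_mul] at this
    rw [this]
    unfold Desc
    simp only [Equiv.Perm.one_apply, not_lt, Fin.le_def]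
    rw [pos_val (by omega) (by omega), pos_val (by omega) (by omega)]
    omega
  rw [D_desc _ h1 h hd, s_mul_s, D_one]

lemma dd_sch (w : Equiv.Perm (Fin N)) {i : ℕ} (h1 : 1 ≤ i) (h : i < N) (hd : ¬ Desc w i) :
    divDiff i (schubertPoly N w) = 0 := by
  rw [dd_eq_D h1 h, sch_eq, D_mul, if_neg]
  intro e
  have e2 : s N i * (w⁻¹ * w0 N) = (w * s N i)⁻¹ * w0 N := by
    rw [mul_inv_rev, s_inv, mul_assoc]
  rw [e2] at e
  have h3 := len_sch (w * s N i)
  have h4 := len_sch w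
  have h5 := len_not_desc w h1 h hd
  omega

lemma eps_of_expand (w v w' : Equiv.Perm (Fin N)) (c : Equiv.Perm (Fin N) → ℤ)
    (hc : SS N w * SS N v = ∑ u, c u • SS N u) :
    constantCoeff (D w' (schubertPoly N w * schubertPoly N v)) = c w' := by
  have hmem : schubertPoly N w * schubertPoly N v - ∑ u, c u • schubertPoly N u ∈ symIdeal N := by
    rw [← Ideal.Quotient.eq]
    simp only [SS] at hc
    rw [map_mul, hc, map_sum]
    simp only [map_zsmul]
  have h := D_symIdeal w' _ hmem
  rw [← DH_apply, map_sub, map_sum, map_sub, map_sum, sub_eq_zero] at h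
  simp only [map_zsmul, DH_apply, eps_D_sch] at h
  rw [h]
  simp

theorem main (k m : ℕ) (hk : 1 ≤ k) (hm : 1 ≤ m)
    (hkm : k + m ≤ N) (w w' : Equiv.Perm (Fin N)) (c : Equiv.Perm (Fin N) → ℤ)
    (hc : SS N w * SS N (rPerm N k m) = ∑ u, c u • SS N u) (hne : c w' ≠ 0) :
    kBruhat N k w w' ∧ len w' = len w + m := by
  have he := eps_of_expand w _ w' c hc
  have hlen : len w' = len w + m := by
    have := D_eps w' _ _ ((sch_homog w).mul (sch_homog (rPerm N k m))) (by rw [he]; exact hne)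
    rw [len_rPerm k m hk hkm] at this
    exact this.symm
  refine ⟨?_, hlen⟩
  have hcf : cf (schubertPoly N (rPerm N k m)) w' w ≠ 0 := by
    intro h0
    apply hne
    rw [← he, mul_comm, cf_spec, map_sum]
    apply Finset.sum_eq_zero
    intro v _
    rw [map_mul, eps_D_sch]
    split_ifs with h
    · rw [← h, h0]; simp
    · simp
  have hch := cf_chain (k := k) _ (fun i h1 h2 h3 =>
    dd_sch _ h1 h2 (rPerm_not_desc k m i hk hkm h1 h2 h3)) m w' w hlen hcf
  rcases Relation.reflTransGen_iff_eq_or_transGen.mp hch with h | h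
  · rw [h] at hlen; omega
  · exact h

end Grass

/-- If the structure constant `c^{w'}_{w, r[k,m]}` is nonzero then `w <ₖ w'` in the
`k`-Bruhat order and `ℓ(w') = ℓ(w) + m`.  The structure constants are encoded by
their defining property (here the paper's `n` is `n+1`). -/
theorem kBruhat_of_structure_constant_ne_zero (n k m : ℕ) (hk : 1 ≤ k) (hm : 1 ≤ m)
    (hkm : k + m ≤ n + 1) (w w' : Equiv.Perm (Fin (n + 1)))
    (c : Equiv.Perm (Fin (n + 1)) → ℤ)
    (hc : SS (n + 1) w * SS (n + 1) (rPerm (n + 1) k m) =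
      ∑ u, c u • SS (n + 1) u)
    (hne : c w' ≠ 0) :
    kBruhat (n + 1) k w w' ∧ len w' = len w + m := by
  exact main k m hk hm hkm w w' c hc hne

end SchubertPieri
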